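/- arXiv:2306.10465 — 3 statements merged into one kernel-verified Lean document; each statement's English description precedes it below -/
import Mathlib

section
/- Let n ≥ 1 be an integer, 0 < α < n, 1 < p < n/α, and define q by 1/q = 1/p − α/n. Let φ and ψ be positive measurable functions on ℝ^n × (0,∞) such that there is a constant C > 0, independent of x ∈ ℝ^n and r > 0, with ∫_r^∞ (essinf_{t<s<∞} φ(x,s) s^{n/p}) t^{−n/q} (dt/t) ≤ C ψ(x,r). Then there exists a constant C' > 0 such that for all f ∈ 𝓛^{p,φ}(ℝ^n), the fractional integral I_α f(x) = ∫_{ℝ^n} f(y) |x−y|^{α−n} dy satisfies ‖I_α f‖_{𝓛^{q,ψ}(ℝ^n)} ≤ C' ‖f‖_{𝓛^{p,φ}(ℝ^n)}. -/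
/-!
The proof rests on a local estimate of Guliyev type: for `x` and `r > 0`,
`(|B(x,r)|⁻¹ ∫_{B(x,r)} |I_α f|^q)^{1/q} ≤ c ∫_r^∞ ‖f‖_{L^p(B(x,s))} s^{-n/q-1} ds`
(`local_estimate`). The function `s ↦ ‖f‖_{L^p(B(x,s))}` is increasing, and the Morrey norm bounds it
by a multiple of `φ(x,s) s^{n/p}`; hence it is bounded by a multiple of the essential infimum of
`φ(x,s) s^{n/p}` over larger radii (`local_norm_le_essInf`), and the hypothesis on `φ` and `ψ`
bounds the resulting integral by a multiple of `ψ(x,r)`.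

For the local estimate, `f` is split at the ball `B(x,2r)`. The outer part is bounded pointwise by
writing the kernel as `d^{α-n} = (n-α) ∫_d^∞ s^{α-n-1} ds` and applying Hölder's inequality on each
ball (`riesz_compl_ball_le`, `setLIntegral_ball_le_rpow`). The inner part needs the
Hardy–Littlewood–Sobolev inequality, which is proved by Hedberg's method (`hedberg_optimized`): the
same representation of the kernel gives `I_α g ≤ c (M g)^{p/q} ‖g‖_p^{1-p/q}`, where `M` is the
Hardy–Littlewood maximal function, and `M` is bounded on `L^p` by Vitali covering and a layer-cake
interpolation (`weak_type_dyadicMax`, `strong_type_dyadicMax`).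

All estimates are carried out for nonnegative functions with values in `ℝ≥0∞`, so that no
integrability has to be known in advance.
-/

open MeasureTheory Metric ENNReal

/-- The fractional integral operator `I_α` on `ℝⁿ`:
`I_α f (x) = ∫ f(y) |x - y|^{α - n} dy`. -/
noncomputable def fracInt (n : ℕ) (α : ℝ) (f : EuclideanSpace ℝ (Fin n) → ℝ)
    (x : EuclideanSpace ℝ (Fin n)) : ℝ :=
  ∫ y, f y * dist x y ^ (α - (n : ℝ))

/-- The norm of the generalized Morrey space `𝓛^{p,φ}(ℝⁿ)`. -/
noncomputable def morreyNorm {n : ℕ} (p : ℝ) (φ : EuclideanSpace ℝ (Fin n) → ℝ → ℝ)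
    (f : EuclideanSpace ℝ (Fin n) → ℝ) : ℝ≥0∞ :=
  ⨆ (x : EuclideanSpace ℝ (Fin n)) (r : ℝ) (_ : 0 < r),
    ENNReal.ofReal ((φ x r)⁻¹) *
      ((volume (ball x r))⁻¹ * ∫⁻ y in ball x r, ENNReal.ofReal (|f y| ^ p)) ^ (1 / p)

/-! ### Power integrals and volumes of balls -/

lemma lintegral_Ioi_rpow_neg {b δ : ℝ} (hb : 0 < b) (hδ : 0 < δ) :
    ∫⁻ s in Set.Ioi δ, ENNReal.ofReal (s ^ (-b - 1)) = ENNReal.ofReal (δ ^ (-b) / b) := by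
  rw [← ofReal_integral_eq_lintegral_ofReal (integrableOn_Ioi_rpow_of_lt (by linarith) hδ)]
  · rw [integral_Ioi_rpow_of_lt (by linarith) hδ]
    congr 1
    rw [show -b - 1 + 1 = -b by ring, neg_div_neg_eq]
  · filter_upwards [ae_restrict_mem measurableSet_Ioi] with s hs
    exact Real.rpow_nonneg (hδ.le.trans (le_of_lt hs)) _

lemma lintegral_Ioc_rpow {b δ : ℝ} (hb : 0 < b) (hδ : 0 < δ) :
    ∫⁻ s in Set.Ioc 0 δ, ENNReal.ofReal (s ^ (b - 1)) = ENNReal.ofReal (δ ^ b / b) := by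
  have hi := intervalIntegral.intervalIntegrable_rpow' (a := 0) (b := δ) (r := b - 1) (by linarith)
  rw [intervalIntegrable_iff_integrableOn_Ioc_of_le hδ.le] at hi
  rw [← ofReal_integral_eq_lintegral_ofReal hi]
  · rw [← intervalIntegral.integral_of_le hδ.le, integral_rpow (Or.inl (by linarith))]
    congr 1
    rw [sub_add_cancel, Real.zero_rpow hb.ne', sub_zero]
  · filter_upwards [ae_restrict_mem measurableSet_Ioc] with s hs
    exact Real.rpow_nonneg hs.1.le _

lemma volume_ball_eq {n : ℕ} (x : EuclideanSpace ℝ (Fin n)) {r : ℝ} (hr : 0 < r) :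
    volume (ball x r) =
      ENNReal.ofReal (r ^ (n : ℝ)) * volume (ball (0 : EuclideanSpace ℝ (Fin n)) 1) := by
  rw [Measure.addHaar_ball_of_pos volume x hr, finrank_euclideanSpace_fin, Real.rpow_natCast]

lemma volume_unitBall_ne_zero (n : ℕ) :
    volume (ball (0 : EuclideanSpace ℝ (Fin n)) 1) ≠ 0 :=
  (measure_ball_pos volume _ one_pos).ne'

lemma volume_unitBall_ne_top (n : ℕ) :
    volume (ball (0 : EuclideanSpace ℝ (Fin n)) 1) ≠ ⊤ :=
  measure_ball_lt_top.ne

/-- The layer-cake formula for a single extended nonnegative number, `a = ∞` included. -/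
lemma lintegral_layer {b : ℝ} (hb : 0 < b) (a : ℝ≥0∞) :
    ∫⁻ t in Set.Ioi (0 : ℝ),
      {t : ℝ | ENNReal.ofReal t < a}.indicator (fun t => ENNReal.ofReal (t ^ (b - 1))) t =
      ENNReal.ofReal b⁻¹ * a ^ b := by
  have hbi : ENNReal.ofReal b⁻¹ ≠ 0 := by simpa using hb
  have key : ∀ d : ℝ, 0 < d → ∫⁻ s in Set.Ioo 0 d, ENNReal.ofReal (s ^ (b - 1)) =
      ENNReal.ofReal b⁻¹ * ENNReal.ofReal d ^ b := by
    intro d hd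
    rw [restrict_Ioo_eq_restrict_Ioc, lintegral_Ioc_rpow hb hd, ENNReal.ofReal_rpow_of_pos hd,
      ← ENNReal.ofReal_mul (by positivity)]
    congr 1
    field_simp
  have hm : MeasurableSet {t : ℝ | ENNReal.ofReal t < a} :=
    measurableSet_lt ENNReal.measurable_ofReal measurable_const
  rw [lintegral_indicator hm, Measure.restrict_restrict hm]
  induction a with
  | top =>
    have : ∀ N : ℕ, ENNReal.ofReal b⁻¹ * ENNReal.ofReal ((N : ℝ) + 1) ^ b ≤
        ∫⁻ t in {t : ℝ | ENNReal.ofReal t < ⊤} ∩ Set.Ioi 0, ENNReal.ofReal (t ^ (b - 1)) := by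
      intro N
      rw [← key _ (by positivity)]
      exact lintegral_mono_set fun t ht => ⟨ENNReal.ofReal_lt_top, ht.1⟩
    rw [ENNReal.top_rpow_of_pos hb, ENNReal.mul_top hbi]
    have hlim : Filter.Tendsto
        (fun N : ℕ => ENNReal.ofReal b⁻¹ * ENNReal.ofReal ((N : ℝ) + 1) ^ b)
        Filter.atTop (nhds ⊤) := by
      have h1 : Filter.Tendsto (fun N : ℕ => ENNReal.ofReal ((N : ℝ) + 1))
          Filter.atTop (nhds ⊤) :=
        ENNReal.tendsto_ofReal_atTop.comp
          (Filter.tendsto_atTop_add_const_right _ _ tendsto_natCast_atTop_atTop)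
      have h2 := ENNReal.Tendsto.const_mul (a := ENNReal.ofReal b⁻¹)
        (((ENNReal.continuous_rpow_const (y := b)).tendsto ⊤).comp h1)
        (Or.inl (by simp [ENNReal.top_rpow_of_pos hb]))
      rwa [ENNReal.top_rpow_of_pos hb, ENNReal.mul_top hbi] at h2
    exact top_le_iff.1 (le_of_tendsto' hlim this)
  | coe a =>
    rcases eq_or_ne a 0 with rfl | ha
    · simp [ENNReal.zero_rpow_of_pos hb]
    · have hset : {t : ℝ | ENNReal.ofReal t < (a : ℝ≥0∞)} ∩ Set.Ioi 0 = Set.Ioo 0 (a : ℝ) := by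
        ext t
        simp only [Set.mem_inter_iff, Set.mem_ofPred_eq, Set.mem_Ioi, Set.mem_Ioo]
        rw [and_comm]
        refine and_congr_right fun ht => ?_
        rw [← ENNReal.ofReal_coe_nnreal, ENNReal.ofReal_lt_ofReal_iff (by positivity)]
      rw [hset, key _ (by positivity), ENNReal.ofReal_coe_nnreal]

/-! ### The dyadic Hardy–Littlewood maximal function -/

/-- The centred Hardy–Littlewood maximal function over balls of dyadic radii. Restricting to the
radii `2 ^ k` costs only a factor `2 ^ n` (see `setLIntegral_ball_le_dyadicMax`) and makes
measurability immediate. -/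
noncomputable def dyadicMax {n : ℕ} (g : EuclideanSpace ℝ (Fin n) → ℝ≥0∞)
    (x : EuclideanSpace ℝ (Fin n)) : ℝ≥0∞ :=
  ⨆ k : ℤ, (volume (ball x ((2 : ℝ) ^ k)))⁻¹ * ∫⁻ y in ball x ((2 : ℝ) ^ k), g y

lemma measurable_setLIntegral_ball {n : ℕ} {g : EuclideanSpace ℝ (Fin n) → ℝ≥0∞}
    (hg : Measurable g) :
    Measurable fun z : EuclideanSpace ℝ (Fin n) × ℝ => ∫⁻ y in ball z.1 z.2, g y := by
  have : (fun z : EuclideanSpace ℝ (Fin n) × ℝ => ∫⁻ y in ball z.1 z.2, g y) =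
      fun z => ∫⁻ y, {w : (EuclideanSpace ℝ (Fin n) × ℝ) × EuclideanSpace ℝ (Fin n) |
        dist w.2 w.1.1 < w.1.2}.indicator (fun w => g w.2) (z, y) := by
    ext z
    rw [← lintegral_indicator measurableSet_ball]
    rfl
  rw [this]
  refine Measurable.lintegral_prod_right' (Measurable.indicator (by fun_prop) ?_)
  exact measurableSet_lt (by fun_prop) (by fun_prop)

lemma measurable_dyadicMax {n : ℕ} {g : EuclideanSpace ℝ (Fin n) → ℝ≥0∞}
    (hg : Measurable g) : Measurable (dyadicMax g) := by
  refine Measurable.iSup fun k => ?_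
  have hk : (0 : ℝ) < 2 ^ k := by positivity
  simp only [volume_ball_eq _ hk]
  exact ((measurable_setLIntegral_ball hg).comp (measurable_id.prodMk measurable_const)).const_mul _

lemma setLIntegral_ball_le_dyadicMax {n : ℕ} (g : EuclideanSpace ℝ (Fin n) → ℝ≥0∞)
    (x : EuclideanSpace ℝ (Fin n)) {s : ℝ} (hs : 0 < s) :
    ∫⁻ y in ball x s, g y ≤ ENNReal.ofReal (2 ^ (n : ℝ)) *
      volume (ball (0 : EuclideanSpace ℝ (Fin n)) 1) * ENNReal.ofReal (s ^ (n : ℝ)) *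
        dyadicMax g x := by
  obtain ⟨k, hk1, hk2⟩ := exists_mem_Ico_zpow hs (one_lt_two)
  have hk : (0 : ℝ) < 2 ^ (k + 1) := by positivity
  have hv : volume (ball x ((2 : ℝ) ^ (k + 1))) ≤ ENNReal.ofReal (2 ^ (n : ℝ)) *
      volume (ball (0 : EuclideanSpace ℝ (Fin n)) 1) * ENNReal.ofReal (s ^ (n : ℝ)) := by
    rw [volume_ball_eq _ hk, mul_right_comm, ← ENNReal.ofReal_mul (by positivity),
      ← Real.mul_rpow (by positivity) hs.le]
    gcongr
    rw [zpow_add_one₀ two_ne_zero]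
    linarith
  calc ∫⁻ y in ball x s, g y ≤ ∫⁻ y in ball x ((2 : ℝ) ^ (k + 1)), g y :=
        lintegral_mono_set (ball_subset_ball hk2.le)
    _ = volume (ball x ((2 : ℝ) ^ (k + 1))) * ((volume (ball x ((2 : ℝ) ^ (k + 1))))⁻¹ *
          ∫⁻ y in ball x ((2 : ℝ) ^ (k + 1)), g y) := by
        rw [← mul_assoc, ENNReal.mul_inv_cancel (measure_ball_pos volume _ hk).ne'
          measure_ball_lt_top.ne, one_mul]
    _ ≤ _ := by
        gcongr
        exact le_iSup (fun k : ℤ => (volume (ball x ((2 : ℝ) ^ k)))⁻¹ *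
          ∫⁻ y in ball x ((2 : ℝ) ^ k), g y) (k + 1)

/-- The weak type `(1,1)` inequality, by the Vitali covering lemma with enlargement factor `5`. -/
lemma weak_type_dyadicMax {n : ℕ} (hn : 1 ≤ n) (h : EuclideanSpace ℝ (Fin n) → ℝ≥0∞)
    {t : ℝ≥0∞} (ht : t ≠ 0) (ht' : t ≠ ⊤) :
    volume {x | t < dyadicMax h x} ≤ ENNReal.ofReal (5 ^ (n : ℝ)) * t⁻¹ * ∫⁻ y, h y := by
  have h5 : ENNReal.ofReal (5 ^ (n : ℝ)) * t⁻¹ ≠ 0 :=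
    mul_ne_zero (by simp) (ENNReal.inv_ne_zero.2 ht')
  rcases eq_or_ne (∫⁻ y, h y) ⊤ with hI | hI
  · rw [hI, ENNReal.mul_top h5]
    exact le_top
  set ω := volume (ball (0 : EuclideanSpace ℝ (Fin n)) 1) with hω
  have hω0 : ω ≠ 0 := volume_unitBall_ne_zero n
  have hωt : ω ≠ ⊤ := volume_unitBall_ne_top n
  have hex : ∀ x, ∃ r : ℝ, x ∈ {x | t < dyadicMax h x} →
      0 < r ∧ t * volume (ball x r) ≤ ∫⁻ y in ball x r, h y := by
    intro x
    by_cases hx : x ∈ {x | t < dyadicMax h x}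
    · obtain ⟨k, hk⟩ := lt_iSup_iff.1 (show t < dyadicMax h x from hx)
      have hk0 : (0 : ℝ) < 2 ^ k := by positivity
      refine ⟨2 ^ k, fun _ => ⟨hk0, ?_⟩⟩
      rw [← ENNReal.le_div_iff_mul_le (Or.inl (measure_ball_pos volume _ hk0).ne')
        (Or.inl measure_ball_lt_top.ne), ENNReal.div_eq_inv_mul]
      exact hk.le
    · exact ⟨0, fun h => absurd h hx⟩
  choose r hr using hex
  -- Finiteness of `∫ h` bounds the radii of the selected balls, as Vitali's lemma requires.
  have hbd : ∀ x ∈ {x | t < dyadicMax h x},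
      r x ≤ max 1 ((∫⁻ y, h y) / (t * ω)).toReal := by
    intro x hx
    obtain ⟨h0, h1⟩ := hr x hx
    rcases le_total (r x) 1 with hr1 | hr1
    · exact hr1.trans (le_max_left _ _)
    refine le_trans ?_ (le_max_right _ _)
    have h2 : ENNReal.ofReal (r x) * (t * ω) ≤ ∫⁻ y, h y := by
      calc ENNReal.ofReal (r x) * (t * ω)
          ≤ ENNReal.ofReal (r x ^ (n : ℝ)) * (t * ω) := by
            gcongr
            exact Real.self_le_rpow_of_one_le hr1 (by exact_mod_cast hn)
        _ = t * volume (ball x (r x)) := by rw [volume_ball_eq _ h0]; ring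
        _ ≤ _ := h1.trans (setLIntegral_le_lintegral _ _)
    rw [← ENNReal.le_div_iff_mul_le (Or.inl (mul_ne_zero ht hω0))
      (Or.inl (ENNReal.mul_ne_top ht' hωt))] at h2
    exact (ENNReal.ofReal_le_iff_le_toReal (ENNReal.div_ne_top hI (mul_ne_zero ht hω0))).1 h2
  obtain ⟨u, hut, hud, hcov⟩ := Vitali.exists_disjoint_subfamily_covering_enlargement_closedBall
    {x | t < dyadicMax h x} id r _ hbd 5 (by norm_num)
  have hcount : u.Countable := hud.countable_of_nonempty_interior fun x hx =>
    ⟨x, interior_mono ball_subset_closedBall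
      (by rw [isOpen_ball.interior_eq]; exact mem_ball_self (hr x (hut hx)).1)⟩
  have hballs : u.PairwiseDisjoint fun x => ball x (r x) :=
    hud.mono fun x => ball_subset_closedBall
  calc volume {x | t < dyadicMax h x}
      ≤ volume (⋃ x ∈ u, closedBall x (5 * r x)) := by
        refine measure_mono fun x hx => ?_
        obtain ⟨b, hb, hsub⟩ := hcov x hx
        exact Set.mem_biUnion hb (hsub (mem_closedBall_self (hr x hx).1.le))
    _ ≤ ∑' x : u, volume (closedBall (x : EuclideanSpace ℝ (Fin n)) (5 * r x)) :=
        measure_biUnion_le _ hcount _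
    _ ≤ ∑' x : u, ENNReal.ofReal (5 ^ (n : ℝ)) * t⁻¹ *
          ∫⁻ y in ball (x : EuclideanSpace ℝ (Fin n)) (r x), h y := by
        refine ENNReal.tsum_le_tsum fun x => ?_
        obtain ⟨h0, h1⟩ := hr x (hut x.2)
        calc volume (closedBall (x : EuclideanSpace ℝ (Fin n)) (5 * r x))
            = ENNReal.ofReal (5 ^ (n : ℝ)) * t⁻¹ * (t * volume (ball x.1 (r x))) := by
              rw [Measure.addHaar_closedBall volume _ (by positivity),
                finrank_euclideanSpace_fin, ← Real.rpow_natCast, volume_ball_eq _ h0,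
                Real.mul_rpow (by norm_num) h0.le, ENNReal.ofReal_mul (by positivity),
                mul_assoc _ t⁻¹, ← mul_assoc t⁻¹, ENNReal.inv_mul_cancel ht ht', one_mul, mul_assoc]
          _ ≤ _ := by gcongr
    _ = ENNReal.ofReal (5 ^ (n : ℝ)) * t⁻¹ * ∫⁻ y in ⋃ x ∈ u, ball x (r x), h y := by
        rw [ENNReal.tsum_mul_left, lintegral_biUnion hcount (fun _ _ => measurableSet_ball) hballs]
    _ ≤ _ := mul_le_mul_right (setLIntegral_le_lintegral _ _) _

/-- Truncation: the part of `g` below `t / 2` contributes at most `t / 2` to the maximal function,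
so the level set at height `t` is controlled by the part of `g` above `t / 2`. -/
lemma volume_dyadicMax_gt_le {n : ℕ} (hn : 1 ≤ n) (g : EuclideanSpace ℝ (Fin n) → ℝ≥0∞)
    {t : ℝ} (ht : 0 < t) :
    volume {x | ENNReal.ofReal t < dyadicMax g x} ≤
      ENNReal.ofReal (5 ^ (n : ℝ)) * (ENNReal.ofReal t / 2)⁻¹ *
        ∫⁻ y, {y | ENNReal.ofReal t < 2 * g y}.indicator g y := by
  set T := ENNReal.ofReal t / 2 with hT
  have hT0 : T ≠ 0 := by simpa [hT, ENNReal.div_eq_zero_iff] using ht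
  have hTt : T ≠ ⊤ := ENNReal.div_ne_top ENNReal.ofReal_ne_top two_ne_zero
  set h := {y | ENNReal.ofReal t < 2 * g y}.indicator g with hh
  have hgh : ∀ y, g y ≤ h y + T := by
    intro y
    by_cases hy : y ∈ {y | ENNReal.ofReal t < 2 * g y}
    · rw [hh, Set.indicator_of_mem hy]
      exact le_self_add
    · rw [hh, Set.indicator_of_notMem hy, zero_add, hT,
        ENNReal.le_div_iff_mul_le (Or.inl two_ne_zero) (Or.inl ENNReal.ofNat_ne_top), mul_comm]
      exact not_lt.1 hy
  have hM : ∀ x, dyadicMax g x ≤ dyadicMax h x + T := by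
    intro x
    refine iSup_le fun k => ?_
    have hk : (0 : ℝ) < 2 ^ k := by positivity
    calc (volume (ball x ((2 : ℝ) ^ k)))⁻¹ * ∫⁻ y in ball x ((2 : ℝ) ^ k), g y
        ≤ (volume (ball x ((2 : ℝ) ^ k)))⁻¹ * ∫⁻ y in ball x ((2 : ℝ) ^ k), (h y + T) :=
          mul_le_mul_right (lintegral_mono hgh) _
      _ = (volume (ball x ((2 : ℝ) ^ k)))⁻¹ * (∫⁻ y in ball x ((2 : ℝ) ^ k), h y) + T := by
          rw [lintegral_add_right _ measurable_const, setLIntegral_const, mul_add, mul_comm T,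
            ← mul_assoc _ _ T, ENNReal.inv_mul_cancel (measure_ball_pos volume _ hk).ne'
            measure_ball_lt_top.ne, one_mul]
      _ ≤ _ := add_le_add_left (le_iSup (fun k : ℤ => (volume (ball x ((2 : ℝ) ^ k)))⁻¹ *
          ∫⁻ y in ball x ((2 : ℝ) ^ k), h y) k) _
  refine le_trans (measure_mono fun x hx => ?_) (weak_type_dyadicMax hn h hT0 hTt)
  have h1 : T + T < dyadicMax h x + T := by
    rw [hT, ENNReal.add_halves]
    exact lt_of_lt_of_le hx (hM x)
  exact lt_of_add_lt_add_right h1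

/-- The strong type `(p,p)` inequality for the maximal function, by interpolating the weak type
`(1,1)` bound with the trivial `L^∞` bound. -/
lemma strong_type_dyadicMax {n : ℕ} (hn : 1 ≤ n) {p : ℝ} (hp : 1 < p) :
    ∃ c : ℝ≥0∞, c ≠ ⊤ ∧ ∀ g : EuclideanSpace ℝ (Fin n) → ℝ≥0∞, Measurable g →
      ∫⁻ x, dyadicMax g x ^ p ≤ c * ∫⁻ x, g x ^ p := by
  have hp0 : 0 < p := by linarith
  refine ⟨ENNReal.ofReal p * (ENNReal.ofReal (5 ^ (n : ℝ)) * 2 *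
    (ENNReal.ofReal (p - 1)⁻¹ * 2 ^ (p - 1))), ?_, fun g hg => ?_⟩
  · have : (2 : ℝ≥0∞) ^ (p - 1) ≠ ⊤ := ENNReal.rpow_ne_top_of_nonneg (by linarith) (by simp)
    finiteness
  have hlayer : ∀ a : ℝ≥0∞, a ^ p = ENNReal.ofReal p * ∫⁻ t in Set.Ioi (0 : ℝ),
      {t : ℝ | ENNReal.ofReal t < a}.indicator (fun t => ENNReal.ofReal (t ^ (p - 1))) t := by
    intro a
    rw [lintegral_layer hp0, ← mul_assoc, ← ENNReal.ofReal_mul hp0.le, mul_inv_cancel₀ hp0.ne',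
      ENNReal.ofReal_one, one_mul]
  have hMm := measurable_dyadicMax hg
  calc ∫⁻ x, dyadicMax g x ^ p
      = ENNReal.ofReal p * ∫⁻ x, ∫⁻ t in Set.Ioi (0 : ℝ),
          {t : ℝ | ENNReal.ofReal t < dyadicMax g x}.indicator
            (fun t => ENNReal.ofReal (t ^ (p - 1))) t := by
        simp_rw [hlayer]
        rw [lintegral_const_mul' _ _ ENNReal.ofReal_ne_top]
    _ = ENNReal.ofReal p * ∫⁻ t in Set.Ioi (0 : ℝ), ∫⁻ x,
          {t : ℝ | ENNReal.ofReal t < dyadicMax g x}.indicator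
            (fun t => ENNReal.ofReal (t ^ (p - 1))) t := by
        rw [lintegral_lintegral_swap]
        refine Measurable.aemeasurable ?_
        refine Measurable.indicator (s := {w : EuclideanSpace ℝ (Fin n) × ℝ |
          ENNReal.ofReal w.2 < dyadicMax g w.1}) (f := fun w => ENNReal.ofReal (w.2 ^ (p - 1)))
          (by fun_prop) (measurableSet_lt (by fun_prop) (by fun_prop))
    _ ≤ ENNReal.ofReal p * ∫⁻ t in Set.Ioi (0 : ℝ), ENNReal.ofReal (5 ^ (n : ℝ)) * 2 *
          ∫⁻ y, g y * {t : ℝ | ENNReal.ofReal t < 2 * g y}.indicator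
            (fun t => ENNReal.ofReal (t ^ (p - 1 - 1))) t := by
        refine mul_le_mul_right (setLIntegral_mono' measurableSet_Ioi fun t (ht : 0 < t) => ?_) _
        have e1 : ∫⁻ x, {t : ℝ | ENNReal.ofReal t < dyadicMax g x}.indicator
            (fun t => ENNReal.ofReal (t ^ (p - 1))) t =
            ENNReal.ofReal (t ^ (p - 1)) * volume {x | ENNReal.ofReal t < dyadicMax g x} := by
          rw [← lintegral_indicator_const (measurableSet_lt measurable_const hMm)]
          rfl
        have e2 : ∫⁻ y, g y * {t : ℝ | ENNReal.ofReal t < 2 * g y}.indicator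
            (fun t => ENNReal.ofReal (t ^ (p - 1 - 1))) t =
            ENNReal.ofReal (t ^ (p - 1 - 1)) *
              ∫⁻ y, {y | ENNReal.ofReal t < 2 * g y}.indicator g y := by
          rw [← lintegral_const_mul' _ _ ENNReal.ofReal_ne_top]
          refine lintegral_congr fun y => ?_
          by_cases hy : ENNReal.ofReal t < 2 * g y
          · rw [Set.indicator_of_mem (show t ∈ {t : ℝ | ENNReal.ofReal t < 2 * g y} from hy),
              Set.indicator_of_mem (show y ∈ {y | ENNReal.ofReal t < 2 * g y} from hy), mul_comm]
          · rw [Set.indicator_of_notMem (show t ∉ {t : ℝ | ENNReal.ofReal t < 2 * g y} from hy),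
              Set.indicator_of_notMem (show y ∉ {y | ENNReal.ofReal t < 2 * g y} from hy)]
            simp
        rw [e1, e2]
        refine (mul_le_mul_right (volume_dyadicMax_gt_le hn g ht) _).trans (le_of_eq ?_)
        have e3 : ENNReal.ofReal (t ^ (p - 1)) * (ENNReal.ofReal t / 2)⁻¹ =
            2 * ENNReal.ofReal (t ^ (p - 1 - 1)) := by
          rw [show ENNReal.ofReal t / 2 = ENNReal.ofReal (t / 2) by
            rw [ENNReal.ofReal_div_of_pos two_pos]; simp,
            ← ENNReal.ofReal_inv_of_pos (by positivity), ← ENNReal.ofReal_mul (by positivity),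
            show (2 : ℝ≥0∞) = ENNReal.ofReal 2 by simp, ← ENNReal.ofReal_mul (by positivity),
            Real.rpow_sub_one ht.ne' (p - 1)]
          congr 1
          field_simp
        calc _ = ENNReal.ofReal (5 ^ (n : ℝ)) *
              (ENNReal.ofReal (t ^ (p - 1)) * (ENNReal.ofReal t / 2)⁻¹) *
              ∫⁻ y, {y | ENNReal.ofReal t < 2 * g y}.indicator g y := by ring
          _ = _ := by rw [e3]; ring
    _ = ENNReal.ofReal p * (ENNReal.ofReal (5 ^ (n : ℝ)) * 2 *
          ∫⁻ y, ∫⁻ t in Set.Ioi (0 : ℝ), g y * {t : ℝ | ENNReal.ofReal t < 2 * g y}.indicator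
            (fun t => ENNReal.ofReal (t ^ (p - 1 - 1))) t) := by
        rw [lintegral_const_mul' _ _ (by finiteness), lintegral_lintegral_swap]
        refine Measurable.aemeasurable ?_
        refine Measurable.mul (by fun_prop) ?_
        refine Measurable.indicator (s := {w : ℝ × EuclideanSpace ℝ (Fin n) |
          ENNReal.ofReal w.1 < 2 * g w.2}) (f := fun w => ENNReal.ofReal (w.1 ^ (p - 1 - 1)))
          (by fun_prop) (measurableSet_lt (by fun_prop) (by fun_prop))
    _ = ENNReal.ofReal p * (ENNReal.ofReal (5 ^ (n : ℝ)) * 2 *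
          ∫⁻ y, ENNReal.ofReal (p - 1)⁻¹ * 2 ^ (p - 1) * g y ^ p) := by
        congr 2
        refine lintegral_congr fun y => ?_
        rw [lintegral_const_mul _ (Measurable.indicator (by fun_prop)
          (measurableSet_lt (by fun_prop) (by fun_prop))),
          lintegral_layer (by linarith), ENNReal.mul_rpow_of_nonneg _ _ (by linarith)]
        have : g y ^ p = g y * g y ^ (p - 1) := by
          conv_rhs => rw [← ENNReal.rpow_one (g y), ← ENNReal.rpow_mul, one_mul]
          rw [← ENNReal.rpow_add_of_nonneg _ _ zero_le_one (by linarith)]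
          congr 1
          ring
        rw [this]
        ring
    _ = _ := by
        rw [lintegral_const_mul _ (by fun_prop)]
        ring

/-! ### Riesz potentials and the Hardy–Littlewood–Sobolev inequality -/

lemma ofReal_rpow_neg_le {b d : ℝ} (hb : 0 < b) (hd : 0 ≤ d) :
    ENNReal.ofReal (d ^ (-b)) ≤
      ENNReal.ofReal b * ∫⁻ s in Set.Ioi d, ENNReal.ofReal (s ^ (-b - 1)) := by
  rcases hd.eq_or_lt with rfl | hd
  -- `0 ^ (-b) = 0` by convention, so the bound is trivial there.
  · rw [Real.zero_rpow (by linarith), ENNReal.ofReal_zero]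
    exact zero_le
  · rw [lintegral_Ioi_rpow_neg hb hd, ← ENNReal.ofReal_mul hb.le, mul_div_cancel₀ _ hb.ne']

/-- Writing `d ^ (-b)` as `b ∫_d^∞ s ^ (-b - 1) ds` turns a Riesz potential outside a ball into a
weighted integral of ball averages. The case `ρ = 0` is the whole potential. -/
lemma riesz_compl_ball_le {n : ℕ} {b : ℝ} (hb : 0 < b) {g : EuclideanSpace ℝ (Fin n) → ℝ≥0∞}
    (hg : Measurable g) (x : EuclideanSpace ℝ (Fin n)) (ρ : ℝ) :
    ∫⁻ y in (ball x ρ)ᶜ, g y * ENNReal.ofReal (dist x y ^ (-b)) ≤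
      ENNReal.ofReal b * ∫⁻ s in Set.Ioi ρ, ENNReal.ofReal (s ^ (-b - 1)) *
        ∫⁻ y in ball x s, g y := by
  have hm : Measurable fun w : EuclideanSpace ℝ (Fin n) × ℝ =>
      g w.1 * {w : EuclideanSpace ℝ (Fin n) × ℝ | dist w.1 x < w.2}.indicator
        (fun w => ENNReal.ofReal (w.2 ^ (-b - 1))) w :=
    Measurable.mul (by fun_prop) (Measurable.indicator (by fun_prop)
      (measurableSet_lt (by fun_prop) (by fun_prop)))
  calc ∫⁻ y in (ball x ρ)ᶜ, g y * ENNReal.ofReal (dist x y ^ (-b))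
      ≤ ∫⁻ y in (ball x ρ)ᶜ, ENNReal.ofReal b * ∫⁻ s in Set.Ioi ρ,
          g y * {w : EuclideanSpace ℝ (Fin n) × ℝ | dist w.1 x < w.2}.indicator
        (fun w => ENNReal.ofReal (w.2 ^ (-b - 1))) (y, s) := by
        refine setLIntegral_mono' measurableSet_ball.compl fun y hy => ?_
        have hy' : ρ ≤ dist x y := by
          rw [dist_comm]; simpa using hy
        have e : ∫⁻ s in Set.Ioi ρ,
            g y * {w : EuclideanSpace ℝ (Fin n) × ℝ | dist w.1 x < w.2}.indicator
              (fun w => ENNReal.ofReal (w.2 ^ (-b - 1))) (y, s) =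
            g y * ∫⁻ s in Set.Ioi (dist x y), ENNReal.ofReal (s ^ (-b - 1)) := by
          have : ∀ s : ℝ, {w : EuclideanSpace ℝ (Fin n) × ℝ | dist w.1 x < w.2}.indicator
              (fun w => ENNReal.ofReal (w.2 ^ (-b - 1))) (y, s) =
              (Set.Ioi (dist x y)).indicator (fun s => ENNReal.ofReal (s ^ (-b - 1))) s := by
            intro s
            simp [Set.indicator, dist_comm]
          simp_rw [this]
          rw [lintegral_const_mul _ (Measurable.indicator (by fun_prop) measurableSet_Ioi),
            lintegral_indicator measurableSet_Ioi,
            Measure.restrict_restrict measurableSet_Ioi,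
            Set.inter_eq_left.2 (Set.Ioi_subset_Ioi hy')]
        rw [e, mul_left_comm]
        exact mul_le_mul_right (ofReal_rpow_neg_le hb dist_nonneg) _
    _ ≤ ∫⁻ y, ENNReal.ofReal b * ∫⁻ s in Set.Ioi ρ,
          g y * {w : EuclideanSpace ℝ (Fin n) × ℝ | dist w.1 x < w.2}.indicator
        (fun w => ENNReal.ofReal (w.2 ^ (-b - 1))) (y, s) := setLIntegral_le_lintegral _ _
    _ = ENNReal.ofReal b * ∫⁻ s in Set.Ioi ρ, ∫⁻ y,
          g y * {w : EuclideanSpace ℝ (Fin n) × ℝ | dist w.1 x < w.2}.indicator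
        (fun w => ENNReal.ofReal (w.2 ^ (-b - 1))) (y, s) := by
        rw [lintegral_const_mul' _ _ ENNReal.ofReal_ne_top, lintegral_lintegral_swap]
        exact hm.aemeasurable
    _ = _ := by
        congr 1
        refine lintegral_congr fun s => ?_
        rw [← lintegral_const_mul' _ _ ENNReal.ofReal_ne_top,
          ← lintegral_indicator measurableSet_ball]
        refine lintegral_congr fun y => ?_
        simp [Set.indicator, mul_comm]

/-- Hölder's inequality on a ball. -/
lemma setLIntegral_ball_le_rpow {n : ℕ} {p : ℝ} (hp : 1 < p)
    {g : EuclideanSpace ℝ (Fin n) → ℝ≥0∞} (hg : Measurable g) (x : EuclideanSpace ℝ (Fin n))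
    {s : ℝ} (hs : 0 < s) :
    ∫⁻ y in ball x s, g y ≤ volume (ball (0 : EuclideanSpace ℝ (Fin n)) 1) ^ (1 - 1 / p) *
      ENNReal.ofReal (s ^ ((n : ℝ) - n / p)) * (∫⁻ y in ball x s, g y ^ p) ^ (1 / p) := by
  have hc := Real.HolderConjugate.conjExponent hp
  have h := ENNReal.lintegral_mul_le_Lp_mul_Lq (volume.restrict (ball x s)) hc
    hg.aemeasurable (g := fun _ => 1) aemeasurable_const
  have e : 1 / p.conjExponent = 1 - 1 / p := by
    have := hc.inv_add_inv_eq_one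
    simp only [one_div]
    linarith
  have h1p : 0 ≤ 1 - 1 / p := by
    rw [← e]
    exact one_div_nonneg.2 hc.symm.nonneg
  simp only [Pi.mul_apply, mul_one, ENNReal.one_rpow, lintegral_const, Measure.restrict_apply,
    MeasurableSet.univ, Set.univ_inter, one_mul] at h
  rw [e, volume_ball_eq x hs, ENNReal.mul_rpow_of_nonneg _ _ h1p,
    ENNReal.ofReal_rpow_of_nonneg (by positivity) h1p, ← Real.rpow_mul hs.le] at h
  refine h.trans (le_of_eq ?_)
  rw [show (n : ℝ) * (1 - 1 / p) = n - n / p by ring]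
  ring

/-- The fractional integral of a nonnegative function, as an extended nonnegative number. -/
noncomputable def rieszPot {n : ℕ} (α : ℝ) (g : EuclideanSpace ℝ (Fin n) → ℝ≥0∞)
    (x : EuclideanSpace ℝ (Fin n)) : ℝ≥0∞ :=
  ∫⁻ y, g y * ENNReal.ofReal (dist x y ^ (α - (n : ℝ)))

lemma rieszPot_le {n : ℕ} {α : ℝ} (hα : α < n) {g : EuclideanSpace ℝ (Fin n) → ℝ≥0∞}
    (hg : Measurable g) (x : EuclideanSpace ℝ (Fin n)) :
    rieszPot α g x ≤ ENNReal.ofReal (n - α) * ∫⁻ s in Set.Ioi (0 : ℝ),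
      ENNReal.ofReal (s ^ (-((n : ℝ) - α) - 1)) * ∫⁻ y in ball x s, g y := by
  have h := riesz_compl_ball_le (sub_pos.2 hα) hg x 0
  simpa [rieszPot] using h

/-- Hedberg's estimate with a free parameter `δ`: balls of radius at most `δ` are controlled by
the maximal function, the others by Hölder's inequality. -/
lemma hedberg {n : ℕ} (hn : 1 ≤ n) {α p q : ℝ} (hα : 0 < α ∧ α < n) (hp : 1 < p)
    (hq0 : 0 < q) (hq : (n : ℝ) / q = n / p - α) :
    ∃ c : ℝ≥0∞, c ≠ ⊤ ∧ ∀ g : EuclideanSpace ℝ (Fin n) → ℝ≥0∞, Measurable g →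
      ∀ x, ∀ δ : ℝ, 0 < δ → rieszPot α g x ≤
        c * (ENNReal.ofReal (δ ^ α) * dyadicMax g x +
          ENNReal.ofReal (δ ^ (-((n : ℝ) / q))) * (∫⁻ y, g y ^ p) ^ (1 / p)) := by
  have hn0 : (0 : ℝ) < n := by exact_mod_cast hn
  have hnq : 0 < (n : ℝ) / q := by positivity
  set K : ℝ≥0∞ := ENNReal.ofReal (2 ^ (n : ℝ)) *
    volume (ball (0 : EuclideanSpace ℝ (Fin n)) 1) with hK
  set K' : ℝ≥0∞ := volume (ball (0 : EuclideanSpace ℝ (Fin n)) 1) ^ (1 - 1 / p) with hK'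
  have hKt : K ≠ ⊤ := ENNReal.mul_ne_top ENNReal.ofReal_ne_top (volume_unitBall_ne_top n)
  have hKt' : K' ≠ ⊤ := by
    refine ENNReal.rpow_ne_top_of_nonneg ?_ (volume_unitBall_ne_top n)
    rw [sub_nonneg, div_le_one (by linarith)]
    exact hp.le
  set c₁ := K * ENNReal.ofReal α⁻¹ with hc₁
  set c₂ := K' * ENNReal.ofReal ((n : ℝ) / q)⁻¹ with hc₂
  refine ⟨ENNReal.ofReal (n - α) * (c₁ + c₂), by finiteness, fun g hg x δ hδ => ?_⟩
  set A := (∫⁻ y, g y ^ p) ^ (1 / p) with hA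
  set a := dyadicMax g x with ha
  have near : ∫⁻ s in Set.Ioc 0 δ, ENNReal.ofReal (s ^ (-((n : ℝ) - α) - 1)) *
      ∫⁻ y in ball x s, g y ≤ c₁ * (ENNReal.ofReal (δ ^ α) * a) := by
    calc _ ≤ ∫⁻ s in Set.Ioc 0 δ, (K * a) * ENNReal.ofReal (s ^ (α - 1)) := by
          refine setLIntegral_mono' measurableSet_Ioc fun s hs => ?_
          refine (mul_le_mul_right (setLIntegral_ball_le_dyadicMax g x hs.1) _).trans
            (le_of_eq ?_)
          rw [show α - 1 = (-((n : ℝ) - α) - 1) + n by ring, Real.rpow_add hs.1,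
            ENNReal.ofReal_mul (Real.rpow_nonneg hs.1.le _)]
          ring
      _ = _ := by
          rw [lintegral_const_mul _ (by fun_prop), lintegral_Ioc_rpow hα.1 hδ, div_eq_mul_inv,
            ENNReal.ofReal_mul (by positivity)]
          ring
  have far : ∫⁻ s in Set.Ioi δ, ENNReal.ofReal (s ^ (-((n : ℝ) - α) - 1)) *
      ∫⁻ y in ball x s, g y ≤ c₂ * (ENNReal.ofReal (δ ^ (-((n : ℝ) / q))) * A) := by
    calc _ ≤ ∫⁻ s in Set.Ioi δ, (K' * A) * ENNReal.ofReal (s ^ (-((n : ℝ) / q) - 1)) := by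
          refine setLIntegral_mono' measurableSet_Ioi fun s (hs : δ < s) => ?_
          have hs0 : 0 < s := hδ.trans hs
          have h1 : (∫⁻ y in ball x s, g y ^ p) ^ (1 / p) ≤ A :=
            ENNReal.rpow_le_rpow (setLIntegral_le_lintegral _ _) (by positivity)
          have h2 := setLIntegral_ball_le_rpow hp hg x hs0
          refine (mul_le_mul_right (h2.trans (mul_le_mul_right h1
            (K' * ENNReal.ofReal (s ^ ((n : ℝ) - n / p))))) _).trans (le_of_eq ?_)
          rw [show -((n : ℝ) / q) - 1 = (-((n : ℝ) - α) - 1) + (n - n / p) by rw [hq]; ring,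
            Real.rpow_add hs0, ENNReal.ofReal_mul (Real.rpow_nonneg hs0.le _)]
          ring
      _ = _ := by
          rw [lintegral_const_mul _ (by fun_prop), lintegral_Ioi_rpow_neg hnq hδ, div_eq_mul_inv,
            ENNReal.ofReal_mul (by positivity)]
          ring
  calc rieszPot α g x ≤ ENNReal.ofReal (n - α) *
        (c₁ * (ENNReal.ofReal (δ ^ α) * a) + c₂ * (ENNReal.ofReal (δ ^ (-((n : ℝ) / q))) * A)) := by
        refine (rieszPot_le hα.2 hg x).trans (mul_le_mul_right ?_ _)
        rw [← Set.Ioc_union_Ioi_eq_Ioi hδ.le]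
        exact (lintegral_union_le _ _ _).trans (add_le_add near far)
    _ ≤ ENNReal.ofReal (n - α) * ((c₁ + c₂) *
        (ENNReal.ofReal (δ ^ α) * a + ENNReal.ofReal (δ ^ (-((n : ℝ) / q))) * A)) := by
        rw [mul_add (c₁ + c₂)]
        gcongr
        · exact le_self_add
        · exact le_add_self
    _ = _ := (mul_assoc _ _ _).symm

/-- Hedberg's inequality `I_α g ≤ c (M g)^{p/q} ‖g‖_p^{1 - p/q}`, from `hedberg` with
`δ = (‖g‖_p / M g)^{p/n}`, which balances the two terms. -/
lemma hedberg_optimized {n : ℕ} (hn : 1 ≤ n) {α p q : ℝ} (hα : 0 < α ∧ α < n) (hp : 1 < p)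
    (hq0 : 0 < q) (hpq : p < q) (hq : (n : ℝ) / q = n / p - α) :
    ∃ c : ℝ≥0∞, c ≠ ⊤ ∧ ∀ g : EuclideanSpace ℝ (Fin n) → ℝ≥0∞, Measurable g →
      (∫⁻ y, g y ^ p) ≠ ⊤ → ∀ x, rieszPot α g x ≤
        c * (dyadicMax g x ^ (p / q) * ((∫⁻ y, g y ^ p) ^ (1 / p)) ^ (1 - p / q)) := by
  have hn0 : (0 : ℝ) < n := by exact_mod_cast hn
  have hp0 : 0 < p := by linarith
  obtain ⟨c, hc, H⟩ := hedberg hn hα hp hq0 hq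
  refine ⟨2 * c + 1, by finiteness, fun g hg hfin x => ?_⟩
  have hA_top : (∫⁻ y, g y ^ p) ^ (1 / p) ≠ ⊤ :=
    ENNReal.rpow_ne_top_of_nonneg (by positivity) hfin
  have hzero : (∀ s : ℝ, 0 < s → ∫⁻ y in ball x s, g y = 0) → rieszPot α g x = 0 := by
    intro h
    have h0 := rieszPot_le hα.2 hg x
    rw [setLIntegral_congr_fun (g := fun _ => 0) measurableSet_Ioi
      (fun s hs => by simp [h s hs])] at h0
    simpa using h0
  have hθ : 0 < p / q := by positivity
  have hθ1 : 0 < 1 - p / q := by rw [sub_pos, div_lt_one hq0]; exact hpq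
  have hθα : 1 - p / q = p * α / n := by
    have : (1 : ℝ) / q = 1 / p - α / n := by
      field_simp at hq ⊢
      linarith
    rw [div_eq_mul_one_div p q, this]
    field_simp
    ring
  have hH := H g hg x
  set A := (∫⁻ y, g y ^ p) ^ (1 / p) with hA
  rcases eq_or_ne A 0 with hA0 | hA0
  · rw [hzero]
    · exact zero_le
    intro s hs
    have h1 := setLIntegral_ball_le_rpow hp hg x hs
    have h2 : (∫⁻ y in ball x s, g y ^ p) ^ (1 / p) ≤ A :=
      ENNReal.rpow_le_rpow (setLIntegral_le_lintegral _ _) (by positivity)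
    rw [hA0, nonpos_iff_eq_zero] at h2
    rw [h2, mul_zero] at h1
    exact nonpos_iff_eq_zero.1 h1
  rcases eq_or_ne (dyadicMax g x) 0 with ha0 | ha0
  · rw [hzero]
    · exact zero_le
    intro s hs
    have h1 := setLIntegral_ball_le_dyadicMax g x hs
    rw [ha0, mul_zero] at h1
    exact nonpos_iff_eq_zero.1 h1
  rcases eq_or_ne (dyadicMax g x) ⊤ with hat | hat
  · rw [hat, ENNReal.top_rpow_of_pos hθ, ENNReal.top_mul, ENNReal.mul_top]
    · exact le_top
    · simp
    · exact (ENNReal.rpow_pos (pos_iff_ne_zero.2 hA0) hA_top).ne'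
  obtain ⟨A', hA', hAA⟩ : ∃ A' : ℝ, 0 < A' ∧ A = ENNReal.ofReal A' :=
    ⟨A.toReal, ENNReal.toReal_pos hA0 hA_top, (ENNReal.ofReal_toReal hA_top).symm⟩
  obtain ⟨a', ha', haa⟩ : ∃ a' : ℝ, 0 < a' ∧ dyadicMax g x = ENNReal.ofReal a' :=
    ⟨_, ENNReal.toReal_pos ha0 hat, (ENNReal.ofReal_toReal hat).symm⟩
  have hδ : 0 < (A' / a') ^ (p / n) := by positivity
  have h := hH _ hδ
  have e1 : ((A' / a') ^ (p / n)) ^ α * a' = a' ^ (p / q) * A' ^ (1 - p / q) := by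
    rw [← Real.rpow_mul (by positivity), show p / n * α = 1 - p / q by rw [hθα]; ring,
      Real.div_rpow hA'.le ha'.le]
    have h3 : a' ^ (1 - p / q) = a' / a' ^ (p / q) := by
      rw [Real.rpow_sub ha', Real.rpow_one]
    rw [h3]
    field_simp
  have e2 : ((A' / a') ^ (p / n)) ^ (-((n : ℝ) / q)) * A' = a' ^ (p / q) * A' ^ (1 - p / q) := by
    rw [← Real.rpow_mul (by positivity), show p / n * (-((n : ℝ) / q)) = -(p / q) by field_simp,
      Real.rpow_neg (by positivity), Real.div_rpow hA'.le ha'.le, Real.rpow_sub hA', Real.rpow_one]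
    field_simp
  rw [haa, hAA, ← ENNReal.ofReal_mul (by positivity), ← ENNReal.ofReal_mul (by positivity),
    e1, e2] at h
  rw [haa, hAA, ENNReal.ofReal_rpow_of_pos ha', ENNReal.ofReal_rpow_of_pos hA',
    ← ENNReal.ofReal_mul (by positivity)]
  refine h.trans ?_
  rw [← two_mul, ← mul_assoc, mul_comm c]
  gcongr
  exact le_self_add

/-- The Hardy–Littlewood–Sobolev inequality. -/
lemma hardy_littlewood_sobolev {n : ℕ} (hn : 1 ≤ n) {α p q : ℝ} (hα : 0 < α ∧ α < n) (hp : 1 < p)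
    (hq0 : 0 < q) (hpq : p < q) (hq : (n : ℝ) / q = n / p - α) :
    ∃ c : ℝ≥0∞, c ≠ ⊤ ∧ ∀ g : EuclideanSpace ℝ (Fin n) → ℝ≥0∞, Measurable g →
      (∫⁻ y, g y ^ p) ≠ ⊤ →
        ∫⁻ x, rieszPot α g x ^ q ≤ c * ((∫⁻ y, g y ^ p) ^ (1 / p)) ^ q := by
  have hp0 : 0 < p := by linarith
  obtain ⟨c, hc, H⟩ := hedberg_optimized hn hα hp hq0 hpq hq
  obtain ⟨c', hc', H'⟩ := strong_type_dyadicMax hn hp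
  have hcq : c ^ q ≠ ⊤ := ENNReal.rpow_ne_top_of_nonneg hq0.le hc
  refine ⟨c ^ q * c', by finiteness, fun g hg hfin => ?_⟩
  have hMm := measurable_dyadicMax hg
  set P := ∫⁻ y, g y ^ p with hP
  calc ∫⁻ x, rieszPot α g x ^ q
      ≤ ∫⁻ x, c ^ q * P ^ (1 / p * (1 - p / q) * q) * dyadicMax g x ^ p := by
        refine lintegral_mono fun x => ?_
        refine (ENNReal.rpow_le_rpow (H g hg hfin x) hq0.le).trans (le_of_eq ?_)
        rw [ENNReal.mul_rpow_of_nonneg _ _ hq0.le, ENNReal.mul_rpow_of_nonneg _ _ hq0.le,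
          ← ENNReal.rpow_mul, ← ENNReal.rpow_mul, ← ENNReal.rpow_mul, div_mul_cancel₀ _ hq0.ne', ← hP]
        ring_nf
    _ = c ^ q * P ^ (1 / p * (1 - p / q) * q) * ∫⁻ x, dyadicMax g x ^ p :=
        lintegral_const_mul _ (by fun_prop)
    _ ≤ c ^ q * P ^ (1 / p * (1 - p / q) * q) * (c' * P) := mul_le_mul_right (H' g hg) _
    _ = c ^ q * c' * (P ^ (1 / p * (1 - p / q) * q) * P ^ (1 : ℝ)) := by
        rw [ENNReal.rpow_one]; ring
    _ = _ := by
        have : 0 ≤ 1 - p / q := by rw [sub_nonneg, div_le_one hq0]; exact hpq.le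
        rw [← ENNReal.rpow_add_of_nonneg _ _ (by positivity) zero_le_one, ← ENNReal.rpow_mul]
        congr 2
        field_simp
        ring

/-! ### The local estimate and the Morrey bound -/

/-- The local estimate: the `L^q` mean of `I_α g` over `B(x, r)` is controlled by the local `L^p`
norms of `g` over all larger concentric balls. The part of `g` in `B(x, 2r)` is handled by
Hardy–Littlewood–Sobolev, the rest pointwise. -/
lemma local_estimate {n : ℕ} (hn : 1 ≤ n) {α p q : ℝ} (hα : 0 < α ∧ α < n) (hp : 1 < p)
    (hq0 : 0 < q) (hpq : p < q) (hq : (n : ℝ) / q = n / p - α) :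
    ∃ c : ℝ≥0∞, c ≠ ⊤ ∧ ∀ g : EuclideanSpace ℝ (Fin n) → ℝ≥0∞, Measurable g →
      ∀ x : EuclideanSpace ℝ (Fin n), ∀ r : ℝ, 0 < r →
      (∫⁻ y in ball x (2 * r), g y ^ p) ≠ ⊤ →
      ((volume (ball x r))⁻¹ * ∫⁻ z in ball x r, rieszPot α g z ^ q) ^ (1 / q) ≤
        c * ∫⁻ s in Set.Ioi r, ENNReal.ofReal (s ^ (-((n : ℝ) / q) - 1)) *
          (∫⁻ y in ball x s, g y ^ p) ^ (1 / p) := by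
  have hn0 : (0 : ℝ) < n := by exact_mod_cast hn
  have hp0 : 0 < p := by linarith
  have hnq : 0 < (n : ℝ) / q := by positivity
  have hb : 0 < (n : ℝ) - α := sub_pos.2 hα.2
  obtain ⟨c, hc, H⟩ := hardy_littlewood_sobolev hn hα hp hq0 hpq hq
  set ω := volume (ball (0 : EuclideanSpace ℝ (Fin n)) 1) with hω
  have hω0 : ω ≠ 0 := volume_unitBall_ne_zero n
  have hωt : ω ≠ ⊤ := volume_unitBall_ne_top n
  set K := ENNReal.ofReal (2 ^ ((n : ℝ) - α)) * (ENNReal.ofReal (n - α) * ω ^ (1 - 1 / p)) with hK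
  have hKt : K ≠ ⊤ := by
    have : ω ^ (1 - 1 / p) ≠ ⊤ := by
      refine ENNReal.rpow_ne_top_of_nonneg ?_ hωt
      rw [sub_nonneg, div_le_one hp0]
      exact hp.le
    finiteness
  set L := ENNReal.ofReal (2 ^ ((n : ℝ) / q) * (n / q)) with hL
  have hLq : L ^ q ≠ ⊤ := ENNReal.rpow_ne_top_of_nonneg hq0.le ENNReal.ofReal_ne_top
  have hKq : K ^ q ≠ ⊤ := ENNReal.rpow_ne_top_of_nonneg hq0.le hKt
  have h2q : (2 : ℝ≥0∞) ^ (q - 1) ≠ ⊤ :=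
    ENNReal.rpow_ne_top_of_nonneg (by linarith) ENNReal.ofNat_ne_top
  set c' := 2 ^ (q - 1) * (ω⁻¹ * c * L ^ q + K ^ q) with hc'
  have hωi : ω⁻¹ ≠ ⊤ := ENNReal.inv_ne_top.2 hω0
  have hc't : c' ≠ ⊤ := by finiteness
  refine ⟨c' ^ (1 / q), ENNReal.rpow_ne_top_of_nonneg (by positivity) hc't,
    fun g hg x r hr hfin => ?_⟩
  set F : ℝ → ℝ≥0∞ := fun s => (∫⁻ y in ball x s, g y ^ p) ^ (1 / p) with hF
  set D := ∫⁻ s in Set.Ioi r, ENNReal.ofReal (s ^ (-((n : ℝ) / q) - 1)) * F s with hD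
  have hFmono : ∀ s t, s ≤ t → F s ≤ F t := fun s t hst =>
    ENNReal.rpow_le_rpow (lintegral_mono_set (ball_subset_ball hst)) (by positivity)
  have hsub : Set.Ioi (2 * r) ⊆ Set.Ioi r := Set.Ioi_subset_Ioi (by linarith)
  -- The local norm over `B(x, 2r)` is itself dominated by the integral `D`.
  have hnear : ENNReal.ofReal (r ^ (-((n : ℝ) / q))) * F (2 * r) ≤ L * D := by
    have h1 : ENNReal.ofReal ((2 * r) ^ (-((n : ℝ) / q)) / (n / q)) * F (2 * r) ≤ D := by
      rw [← lintegral_Ioi_rpow_neg hnq (by positivity), ← lintegral_mul_const _ (by fun_prop)]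
      refine (setLIntegral_mono' measurableSet_Ioi fun s (hs : 2 * r < s) => ?_).trans
        (lintegral_mono_set hsub)
      exact mul_le_mul_right (hFmono _ _ hs.le) _
    refine le_trans (le_of_eq ?_) (mul_le_mul_right h1 L)
    rw [← mul_assoc, hL, ← ENNReal.ofReal_mul (by positivity)]
    congr 2
    rw [Real.mul_rpow two_pos.le hr.le, Real.rpow_neg two_pos.le]
    field_simp
  set g₁ := (ball x (2 * r)).indicator g with hg₁
  have hg₁m : Measurable g₁ := hg.indicator measurableSet_ball
  have hg₁p : ∫⁻ y, g₁ y ^ p = ∫⁻ y in ball x (2 * r), g y ^ p := by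
    rw [← lintegral_indicator measurableSet_ball]
    refine lintegral_congr fun y => ?_
    by_cases hy : y ∈ ball x (2 * r)
    · simp only [hg₁, Set.indicator_of_mem hy]
    · simp only [hg₁, Set.indicator_of_notMem hy, ENNReal.zero_rpow_of_pos hp0]
  have hfar : ∫⁻ y in (ball x (2 * r))ᶜ, g y * ENNReal.ofReal (dist x y ^ (-((n : ℝ) - α))) ≤
      ENNReal.ofReal (n - α) * (ω ^ (1 - 1 / p) * D) := by
    refine (riesz_compl_ball_le hb hg x (2 * r)).trans (mul_le_mul_right ?_ _)
    rw [hD, ← lintegral_const_mul' _ _ (by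
      refine ENNReal.rpow_ne_top_of_nonneg ?_ hωt
      rw [sub_nonneg, div_le_one hp0]
      exact hp.le)]
    refine (setLIntegral_mono' measurableSet_Ioi fun s (hs : 2 * r < s) => ?_).trans
      (lintegral_mono_set hsub)
    have hs0 : 0 < s := by linarith
    refine (mul_le_mul_right (setLIntegral_ball_le_rpow hp hg x hs0) _).trans (le_of_eq ?_)
    rw [show -((n : ℝ) / q) - 1 = (-((n : ℝ) - α) - 1) + (n - n / p) by rw [hq]; ring,
      Real.rpow_add hs0, ENNReal.ofReal_mul (Real.rpow_nonneg hs0.le _)]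
    ring
  have hpt : ∀ z ∈ ball x r, rieszPot α g z ≤ rieszPot α g₁ z + K * D := by
    intro z hz
    rw [rieszPot, ← lintegral_add_compl _ (measurableSet_ball (x := x) (ε := 2 * r))]
    refine add_le_add (le_of_eq ?_) ?_
    · rw [rieszPot, ← lintegral_indicator measurableSet_ball]
      refine lintegral_congr fun y => ?_
      by_cases hy : y ∈ ball x (2 * r)
      · simp only [hg₁, Set.indicator_of_mem hy]
      · simp only [hg₁, Set.indicator_of_notMem hy, zero_mul]
    · calc ∫⁻ y in (ball x (2 * r))ᶜ, g y * ENNReal.ofReal (dist z y ^ (α - (n : ℝ)))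
          ≤ ∫⁻ y in (ball x (2 * r))ᶜ, ENNReal.ofReal (2 ^ ((n : ℝ) - α)) *
              (g y * ENNReal.ofReal (dist x y ^ (-((n : ℝ) - α)))) := by
            refine setLIntegral_mono' measurableSet_ball.compl fun y hy => ?_
            have hy' : 2 * r ≤ dist x y := by
              rw [dist_comm]; simpa using hy
            have hzx : dist x z < r := by rw [dist_comm]; exact hz
            have htri := dist_triangle x z y
            have hle : dist x y / 2 ≤ dist z y := by linarith
            have hpos : 0 < dist x y / 2 := by linarith
            rw [mul_left_comm, ← ENNReal.ofReal_mul (by positivity)]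
            gcongr
            calc dist z y ^ (α - (n : ℝ)) ≤ (dist x y / 2) ^ (α - (n : ℝ)) :=
                  Real.rpow_le_rpow_of_nonpos hpos hle (by linarith)
              _ = _ := by
                  rw [Real.div_rpow dist_nonneg two_pos.le, neg_sub, div_eq_mul_inv,
                    ← Real.rpow_neg two_pos.le, neg_sub, mul_comm]
        _ ≤ ENNReal.ofReal (2 ^ ((n : ℝ) - α)) *
              (ENNReal.ofReal (n - α) * (ω ^ (1 - 1 / p) * D)) := by
            rw [lintegral_const_mul' _ _ ENNReal.ofReal_ne_top]
            exact mul_le_mul_right hfar _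
        _ = K * D := by rw [hK]; ring
  have hvol0 : volume (ball x r) ≠ 0 := (measure_ball_pos volume _ hr).ne'
  have hvolt : volume (ball x r) ≠ ⊤ := measure_ball_lt_top.ne
  have hintq : ∫⁻ z in ball x r, rieszPot α g z ^ q ≤
      2 ^ (q - 1) * (c * F (2 * r) ^ q + (K * D) ^ q * volume (ball x r)) := by
    calc ∫⁻ z in ball x r, rieszPot α g z ^ q
        ≤ ∫⁻ z in ball x r, 2 ^ (q - 1) * (rieszPot α g₁ z ^ q + (K * D) ^ q) := by
          refine setLIntegral_mono' measurableSet_ball fun z hz => ?_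
          exact (ENNReal.rpow_le_rpow (hpt z hz) hq0.le).trans
            (ENNReal.rpow_add_le_mul_rpow_add_rpow _ _ (by linarith))
      _ = 2 ^ (q - 1) * ((∫⁻ z in ball x r, rieszPot α g₁ z ^ q) +
            (K * D) ^ q * volume (ball x r)) := by
          rw [lintegral_const_mul' _ _ h2q, lintegral_add_right _ measurable_const,
            setLIntegral_const]
      _ ≤ _ := by
          refine mul_le_mul_right (add_le_add_left ?_ _) _
          refine (setLIntegral_le_lintegral _ _).trans ?_
          have := H g₁ hg₁m (by rw [hg₁p]; exact hfin)
          rwa [hg₁p] at this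
  have hvi : (volume (ball x r))⁻¹ = ω⁻¹ * ENNReal.ofReal (r ^ (-((n : ℝ) / q))) ^ q := by
    rw [volume_ball_eq x hr, ENNReal.mul_inv (Or.inr hωt) (Or.inr hω0), mul_comm,
      ENNReal.ofReal_rpow_of_pos (by positivity), ← Real.rpow_mul hr.le,
      ← ENNReal.ofReal_inv_of_pos (by positivity), ← Real.rpow_neg hr.le]
    congr 3
    field_simp
  have hmean : (volume (ball x r))⁻¹ * ∫⁻ z in ball x r, rieszPot α g z ^ q ≤ c' * D ^ q := by
    calc _ ≤ (volume (ball x r))⁻¹ *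
          (2 ^ (q - 1) * (c * F (2 * r) ^ q + (K * D) ^ q * volume (ball x r))) :=
          mul_le_mul_right hintq _
      _ = 2 ^ (q - 1) * ((volume (ball x r))⁻¹ * (c * F (2 * r) ^ q) +
            (K * D) ^ q * ((volume (ball x r))⁻¹ * volume (ball x r))) := by ring
      _ = 2 ^ (q - 1) * (ω⁻¹ * c * (ENNReal.ofReal (r ^ (-((n : ℝ) / q))) * F (2 * r)) ^ q +
            (K * D) ^ q) := by
          rw [ENNReal.inv_mul_cancel hvol0 hvolt, mul_one, hvi,
            ENNReal.mul_rpow_of_nonneg (ENNReal.ofReal _) _ hq0.le]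
          ring
      _ ≤ 2 ^ (q - 1) * (ω⁻¹ * c * (L * D) ^ q + (K * D) ^ q) := by gcongr
      _ = c' * D ^ q := by
          rw [hc', ENNReal.mul_rpow_of_nonneg _ _ hq0.le, ENNReal.mul_rpow_of_nonneg _ _ hq0.le]
          ring
  calc _ ≤ (c' * D ^ q) ^ (1 / q) := ENNReal.rpow_le_rpow hmean (by positivity)
    _ = c' ^ (1 / q) * D := by
        rw [ENNReal.mul_rpow_of_nonneg _ _ (by positivity), ← ENNReal.rpow_mul,
          mul_one_div_cancel hq0.ne', ENNReal.rpow_one]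

/-- On `(t, ∞)`, a constant below a function everywhere is below its essential infimum. For
real-valued functions this needs the essential infimum not to be a junk value, which holds since
`(t, ∞)` has positive measure. -/
lemma le_essInf_Ioi {h : ℝ → ℝ} {t L : ℝ} (hL : ∀ s, t < s → L ≤ h s) :
    L ≤ essInf h (volume.restrict (Set.Ioi t)) := by
  have hne : (ae (volume.restrict (Set.Ioi t))).NeBot := by
    rw [ae_neBot, Ne, Measure.restrict_eq_zero]
    simp
  refine Filter.le_liminf_of_le ?_ ?_
  · -- Some bound on `h` holds on a non-null set, as the sets `{h ≤ N}` exhaust the line.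
    have : ∃ N : ℕ, ∃ᵐ s ∂(volume.restrict (Set.Ioi t)), h s ≤ N := by
      by_contra hcon
      push Not at hcon
      have h1 : ∀ᵐ s ∂(volume.restrict (Set.Ioi t)), ∀ N : ℕ, ¬ h s ≤ N :=
        ae_all_iff.2 fun N => by simpa using hcon N
      obtain ⟨s, hs⟩ := h1.exists
      obtain ⟨N, hN⟩ := exists_nat_ge (h s)
      exact hs N hN
    obtain ⟨N, hN⟩ := this
    exact Filter.IsCoboundedUnder.of_frequently_le hN
  · filter_upwards [ae_restrict_mem measurableSet_Ioi] with s hs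
    exact hL s hs

/-- The local `L^p` norms of a Morrey function increase with the radius, hence are controlled by
the essential infimum of `φ(x, s) s^{n/p}` over larger radii. -/
lemma local_norm_le_essInf {n : ℕ} {p : ℝ} (hp : 0 < p)
    {φ : EuclideanSpace ℝ (Fin n) → ℝ → ℝ} (hφpos : ∀ x r, 0 < r → 0 < φ x r)
    {f : EuclideanSpace ℝ (Fin n) → ℝ} (hf : morreyNorm p φ f < ⊤)
    (x : EuclideanSpace ℝ (Fin n)) {t : ℝ} (ht : 0 < t) :
    (∫⁻ y in ball x t, ENNReal.ofReal (|f y| ^ p)) ^ (1 / p) ≤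
      morreyNorm p φ f * volume (ball (0 : EuclideanSpace ℝ (Fin n)) 1) ^ (1 / p) *
        ENNReal.ofReal (essInf (fun s => φ x s * s ^ ((n : ℝ) / p))
          (volume.restrict (Set.Ioi t))) := by
  set ω := volume (ball (0 : EuclideanSpace ℝ (Fin n)) 1) with hω
  have hω0 : ω ≠ 0 := volume_unitBall_ne_zero n
  have hωt : ω ≠ ⊤ := volume_unitBall_ne_top n
  have hp' : 0 ≤ 1 / p := by positivity
  set N := morreyNorm p φ f with hN
  set F : ℝ → ℝ≥0∞ := fun s => (∫⁻ y in ball x s, ENNReal.ofReal (|f y| ^ p)) ^ (1 / p) with hF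
  have hFs : ∀ s, 0 < s → F s ≤ N * ω ^ (1 / p) * ENNReal.ofReal (φ x s * s ^ ((n : ℝ) / p)) := by
    intro s hs
    have hφ := hφpos x s hs
    have h1 : ENNReal.ofReal ((φ x s)⁻¹) * ((volume (ball x s))⁻¹ *
        ∫⁻ y in ball x s, ENNReal.ofReal (|f y| ^ p)) ^ (1 / p) ≤ N :=
      le_iSup₂_of_le x s (le_iSup_of_le hs le_rfl)
    have hv : volume (ball x s) ^ (1 / p) = ω ^ (1 / p) * ENNReal.ofReal (s ^ ((n : ℝ) / p)) := by
      rw [volume_ball_eq x hs, ENNReal.mul_rpow_of_nonneg _ _ hp',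
        ENNReal.ofReal_rpow_of_pos (by positivity), ← Real.rpow_mul hs.le, mul_one_div, mul_comm]
    have hv0 : volume (ball x s) ^ (1 / p) ≠ 0 :=
      (ENNReal.rpow_pos (measure_ball_pos volume _ hs) measure_ball_lt_top.ne).ne'
    have hvt : volume (ball x s) ^ (1 / p) ≠ ⊤ :=
      ENNReal.rpow_ne_top_of_nonneg hp' measure_ball_lt_top.ne
    rw [ENNReal.mul_rpow_of_nonneg _ _ hp', ENNReal.inv_rpow] at h1
    have hφ1 : ENNReal.ofReal (φ x s) * ENNReal.ofReal ((φ x s)⁻¹) = 1 := by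
      rw [← ENNReal.ofReal_mul hφ.le, mul_inv_cancel₀ hφ.ne', ENNReal.ofReal_one]
    calc F s = (ENNReal.ofReal (φ x s) * ENNReal.ofReal ((φ x s)⁻¹)) *
          (volume (ball x s) ^ (1 / p) * (volume (ball x s) ^ (1 / p))⁻¹) * F s := by
          rw [hφ1, ENNReal.mul_inv_cancel hv0 hvt, one_mul, one_mul]
      _ = ENNReal.ofReal (φ x s) * volume (ball x s) ^ (1 / p) *
          (ENNReal.ofReal ((φ x s)⁻¹) * ((volume (ball x s) ^ (1 / p))⁻¹ * F s)) := by ring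
      _ ≤ ENNReal.ofReal (φ x s) * volume (ball x s) ^ (1 / p) * N := mul_le_mul_right h1 _
      _ = _ := by
          rw [hv, ENNReal.ofReal_mul hφ.le]
          ring
  have hmono : ∀ s, t < s → F t ≤ F s := fun s hs =>
    ENNReal.rpow_le_rpow (lintegral_mono_set (ball_subset_ball hs.le)) hp'
  change F t ≤ _
  have hωp0 : ω ^ (1 / p) ≠ 0 := (ENNReal.rpow_pos (pos_iff_ne_zero.2 hω0) hωt).ne'
  have hωpt : ω ^ (1 / p) ≠ ⊤ := ENNReal.rpow_ne_top_of_nonneg hp' hωt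
  rcases eq_or_ne N 0 with hN0 | hN0
  · have := hFs t ht
    rw [hN0, zero_mul, zero_mul] at this
    exact this.trans zero_le
  have hM0 : N * ω ^ (1 / p) ≠ 0 := mul_ne_zero hN0 hωp0
  have hMt : N * ω ^ (1 / p) ≠ ⊤ := ENNReal.mul_ne_top hf.ne hωpt
  have hquot : ∀ s, t < s → F t / (N * ω ^ (1 / p)) ≤
      ENNReal.ofReal (φ x s * s ^ ((n : ℝ) / p)) := fun s hs =>
    ENNReal.div_le_of_le_mul' ((hmono s hs).trans (hFs s (ht.trans hs)))
  have hQt : F t / (N * ω ^ (1 / p)) ≠ ⊤ :=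
    ((hquot (t + 1) (by linarith)).trans_lt ENNReal.ofReal_lt_top).ne
  have hess : (F t / (N * ω ^ (1 / p))).toReal ≤ essInf (fun s => φ x s * s ^ ((n : ℝ) / p))
      (volume.restrict (Set.Ioi t)) := by
    refine le_essInf_Ioi fun s hs => ?_
    have hs0 : 0 < s := ht.trans hs
    have := hφpos x s hs0
    exact ENNReal.toReal_le_of_le_ofReal (by positivity) (hquot s hs)
  have h2 := (ENNReal.le_ofReal_iff_toReal_le hQt (ENNReal.toReal_nonneg.trans hess)).2 hess
  rw [mul_comm]
  exact (ENNReal.div_le_iff hM0 hMt).1 h2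

theorem stmt10 (n : ℕ) (hn : 1 ≤ n) (α p q : ℝ)
    (hα : 0 < α ∧ α < (n : ℝ)) (hp : 1 < p ∧ p < (n : ℝ) / α)
    (hq : 1 / q = 1 / p - α / (n : ℝ))
    (φ ψ : EuclideanSpace ℝ (Fin n) → ℝ → ℝ)
    (hφm : Measurable (fun z : EuclideanSpace ℝ (Fin n) × ℝ => φ z.1 z.2))
    (hφpos : ∀ x r, 0 < r → 0 < φ x r)
    (hψm : Measurable (fun z : EuclideanSpace ℝ (Fin n) × ℝ => ψ z.1 z.2))
    (hψpos : ∀ x r, 0 < r → 0 < ψ x r)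
    (C : ℝ) (hC : 0 < C)
    (hcond : ∀ x r, 0 < r →
      (∫⁻ t in Set.Ioi r,
        ENNReal.ofReal
          ((essInf (fun s => φ x s * s ^ ((n : ℝ) / p)) (volume.restrict (Set.Ioi t))) *
            t ^ (-((n : ℝ) / q) - 1))) ≤
      ENNReal.ofReal (C * ψ x r)) :
    ∃ C' > (0 : ℝ), ∀ f : EuclideanSpace ℝ (Fin n) → ℝ, Measurable f →
      (∀ x r, 0 < r → (∫⁻ y in ball x r, ENNReal.ofReal (|f y| ^ p)) < ⊤) →
      morreyNorm p φ f < ⊤ →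
      morreyNorm q ψ (fracInt n α f) ≤ ENNReal.ofReal C' * morreyNorm p φ f := by
  have hn0 : (0 : ℝ) < n := by exact_mod_cast hn
  have hp0 : 0 < p := by linarith [hp.1]
  have hαn : 0 < α / n := div_pos hα.1 hn0
  have hq1 : 0 < 1 / q := by
    rw [hq, sub_pos, div_lt_div_iff₀ hn0 hp0, one_mul, mul_comm]
    exact (lt_div_iff₀ hα.1).1 hp.2
  have hq0 : 0 < q := one_div_pos.1 hq1
  have hpq : p < q := by
    rw [← one_div_lt_one_div hq0 hp0]
    linarith
  have hnq : (n : ℝ) / q = n / p - α := by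
    rw [div_eq_mul_one_div, hq]
    field_simp
  obtain ⟨c, hc, H⟩ := local_estimate hn hα hp.1 hq0 hpq hnq
  set W := volume (ball (0 : EuclideanSpace ℝ (Fin n)) 1) ^ (1 / p) with hW
  have hWt : W ≠ ⊤ := ENNReal.rpow_ne_top_of_nonneg (by positivity) (volume_unitBall_ne_top n)
  have hcWt : c * W * ENNReal.ofReal C ≠ ⊤ := by finiteness
  refine ⟨(c * W * ENNReal.ofReal C).toReal + 1, by positivity, fun f hf hloc hfin => ?_⟩
  have hCle : c * W * ENNReal.ofReal C ≤
      ENNReal.ofReal ((c * W * ENNReal.ofReal C).toReal + 1) := by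
    rw [ENNReal.le_ofReal_iff_toReal_le hcWt (by positivity)]
    linarith
  set N := morreyNorm p φ f with hN
  set g : EuclideanSpace ℝ (Fin n) → ℝ≥0∞ := fun y => ENNReal.ofReal |f y| with hg
  have hgm : Measurable g := by
    have : Measurable fun y => |f y| := by simpa [Real.norm_eq_abs] using hf.norm
    exact this.ennreal_ofReal
  have hgp : ∀ y, ENNReal.ofReal (|f y| ^ p) = g y ^ p := fun y =>
    (ENNReal.ofReal_rpow_of_nonneg (abs_nonneg _) hp0.le).symm
  -- Wherever the integral defining `fracInt` diverges, its value is `0`, so this bound is uniform.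
  have hfrac : ∀ z, ENNReal.ofReal (|fracInt n α f z| ^ q) ≤ rieszPot α g z ^ q := by
    intro z
    rw [← ENNReal.ofReal_rpow_of_nonneg (abs_nonneg _) hq0.le]
    refine ENNReal.rpow_le_rpow ?_ hq0.le
    have h1 := enorm_integral_le_lintegral_enorm (μ := volume)
      (fun y => f y * dist z y ^ (α - (n : ℝ)))
    rw [Real.enorm_eq_ofReal_abs] at h1
    refine h1.trans (le_of_eq (lintegral_congr fun y => ?_))
    rw [Real.enorm_eq_ofReal_abs, abs_mul, ENNReal.ofReal_mul (abs_nonneg _),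
      abs_of_nonneg (Real.rpow_nonneg dist_nonneg (α - (n : ℝ)))]
  refine iSup₂_le fun x r => iSup_le fun hr => ?_
  have hψ := hψpos x r hr
  have hD : ∫⁻ s in Set.Ioi r, ENNReal.ofReal (s ^ (-((n : ℝ) / q) - 1)) *
      (∫⁻ y in ball x s, g y ^ p) ^ (1 / p) ≤ N * W * ENNReal.ofReal (C * ψ x r) := by
    refine le_trans ?_ (mul_le_mul_right (hcond x r hr) (N * W))
    rw [← lintegral_const_mul' _ _ (ENNReal.mul_ne_top hfin.ne hWt)]
    refine setLIntegral_mono' measurableSet_Ioi fun s (hs : r < s) => ?_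
    have hs0 : 0 < s := hr.trans hs
    have h1 := local_norm_le_essInf hp0 hφpos hfin x hs0
    simp_rw [hgp] at h1
    rw [mul_comm (essInf _ _), ENNReal.ofReal_mul (by positivity)]
    refine (mul_le_mul_right h1 _).trans (le_of_eq ?_)
    ring
  have hHx := H g hgm x r hr (by
    have := hloc x (2 * r) (by positivity)
    simp_rw [hgp] at this
    exact this.ne)
  have hψ1 : ENNReal.ofReal ((ψ x r)⁻¹) * ENNReal.ofReal (ψ x r) = 1 := by
    rw [← ENNReal.ofReal_mul (by positivity), inv_mul_cancel₀ hψ.ne', ENNReal.ofReal_one]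
  calc ENNReal.ofReal ((ψ x r)⁻¹) * ((volume (ball x r))⁻¹ *
        ∫⁻ y in ball x r, ENNReal.ofReal (|fracInt n α f y| ^ q)) ^ (1 / q)
      ≤ ENNReal.ofReal ((ψ x r)⁻¹) * ((volume (ball x r))⁻¹ *
        ∫⁻ y in ball x r, rieszPot α g y ^ q) ^ (1 / q) :=
        mul_le_mul_right (ENNReal.rpow_le_rpow
          (mul_le_mul_right (lintegral_mono hfrac) _) hq1.le) _
    _ ≤ ENNReal.ofReal ((ψ x r)⁻¹) * (c * (N * W * ENNReal.ofReal (C * ψ x r))) :=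
        mul_le_mul_right (hHx.trans (mul_le_mul_right hD _)) _
    _ = (ENNReal.ofReal ((ψ x r)⁻¹) * ENNReal.ofReal (ψ x r)) *
          (c * W * ENNReal.ofReal C) * N := by
        rw [ENNReal.ofReal_mul hC.le]
        ring
    _ ≤ _ := by
        rw [hψ1, one_mul]
        exact mul_le_mul_left hCle _
end

section
/- Let n ≥ 1 and m ≥ 1 be integers, let 0 < α_i < n for i = 1,…,m, and set α = α_1 + ⋯ + α_m. Then there exists a constant C > 0 such that for every x ∈ ℝ^n, every r > 0, every y ∈ B(x,r), and all locally integrable functions f_1,…,f_m on ℝ^n, writing f_i^∞ = f_i · χ_{ℝ^n ∖ B(x,2r)}, one has |I_{α,m}(f_1^∞,…,f_m^∞)(y)| ≤ C ∏_{i=1}^m ∫_{ℝ^n ∖ B(x,2r)} |f_i(z)| |z−x|^{α_i−n} dz. -/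
/-!
If `y ∈ B(x,r)` and `zᵢ ∉ B(x,2r)`, then `|x - zᵢ| ≤ 2 |y - zᵢ|`, so the sum `S = ∑ⱼ |y - zⱼ|`
is at least `|x - zᵢ| / 2` for every `i`. All exponents `αᵢ - n` are negative, hence
`S ^ (α - mn) = ∏ᵢ S ^ (αᵢ - n) ≤ ∏ᵢ 2 ^ (n - αᵢ) |x - zᵢ| ^ (αᵢ - n)`
(`sum_dist_rpow_le`). The kernel is thus dominated by a product of functions of the separate
variables, whose integral factorizes by Tonelli's theorem (`lintegral_fin_prod`). Bounding the
Bochner integral by the lower integral of the norm covers the non-integrable case as well.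
-/

open MeasureTheory Metric ENNReal

/-- The multilinear fractional integral operator `I_{α,m}` on `ℝⁿ`. -/
noncomputable def multIFrac (n m : ℕ) (α : ℝ)
    (f : Fin m → EuclideanSpace ℝ (Fin n) → ℝ) (x : EuclideanSpace ℝ (Fin n)) : ℝ :=
  ∫ y : Fin m → EuclideanSpace ℝ (Fin n),
    (∏ i, f i (y i)) * (∑ i, dist x (y i)) ^ (α - (m : ℝ) * (n : ℝ))

/-- Tonelli's theorem for a product of functions of the separate variables. -/
lemma lintegral_fin_prod {E : Type*} [MeasureSpace E] [SigmaFinite (volume : Measure E)]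
    (m : ℕ) (g : Fin m → E → ℝ≥0∞) (hg : ∀ i, AEMeasurable (g i) volume) :
    ∫⁻ z : Fin m → E, ∏ i, g i (z i) = ∏ i, ∫⁻ z, g i z := by
  induction m with
  | zero => simp [volume_pi]
  | succ m ih =>
    have hmeas : AEMeasurable (fun z : Fin m → E => ∏ i, g i.succ (z i)) volume := by
      refine Finset.aemeasurable_fun_prod _ fun i _ => ?_
      exact (hg i.succ).comp_quasiMeasurePreserving
        (Measure.quasiMeasurePreserving_eval (fun _ : Fin m => (volume : Measure E)) i)
    have hmp := (volume_preserving_piFinSuccAbove (fun _ : Fin (m + 1) => E) 0).symm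
    rw [← hmp.lintegral_comp_emb (MeasurableEquiv.measurableEmbedding _), Fin.prod_univ_succ,
      ← ih _ fun i => hg i.succ, ← lintegral_prod_mul (hg 0) hmeas]
    refine lintegral_congr fun z => ?_
    simp [Fin.prod_univ_succ, MeasurableEquiv.piFinSuccAbove_symm_apply, Fin.insertNthEquiv]

/-- The multilinear kernel at `y ∈ B(x,r)` is dominated by a product of linear kernels at `x`
when all variables lie outside `B(x,2r)`. -/
lemma sum_dist_rpow_le {E : Type*} [PseudoMetricSpace E] {m : ℕ} {n : ℝ}
    (α : Fin m → ℝ) (hα : ∀ i, α i < n) {x y : E} {r : ℝ} (hr : 0 < r) (hy : y ∈ ball x r)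
    (hm : 1 ≤ m) (z : Fin m → E) (hz : ∀ i, z i ∉ ball x (2 * r)) :
    (∑ i, dist y (z i)) ^ ((∑ i, α i) - m * n) ≤
      (∏ i, (2 : ℝ) ^ (n - α i)) * ∏ i, dist (z i) x ^ (α i - n) := by
  have hd : ∀ i, 2 * r ≤ dist (z i) x := fun i => by simpa using hz i
  have hS : ∀ i, dist (z i) x / 2 ≤ ∑ j, dist y (z j) := fun i => by
    have h1 : dist y (z i) ≤ ∑ j, dist y (z j) :=
      Finset.single_le_sum (f := fun j => dist y (z j)) (fun j _ => dist_nonneg)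
        (Finset.mem_univ i)
    have h2 := dist_triangle (z i) y x
    rw [dist_comm (z i) y] at h2
    have h3 := mem_ball.1 hy
    linarith [hd i]
  have hpos : 0 < ∑ j, dist y (z j) := by
    have := hS ⟨0, hm⟩
    linarith [hd ⟨0, hm⟩]
  have hexp : (∑ i, α i) - m * n = ∑ i, (α i - n) := by
    simp [Finset.sum_sub_distrib]
  rw [hexp, Real.rpow_sum_of_pos hpos, ← Finset.prod_mul_distrib]
  refine Finset.prod_le_prod (fun i _ => by positivity) fun i _ => ?_
  have hdi : 0 < dist (z i) x := by linarith [hd i]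
  calc (∑ j, dist y (z j)) ^ (α i - n)
      ≤ (dist (z i) x / 2) ^ (α i - n) :=
        Real.rpow_le_rpow_of_nonpos (by positivity) (hS i) (by linarith [hα i])
    _ = 2 ^ (n - α i) * dist (z i) x ^ (α i - n) := by
        rw [Real.div_rpow hdi.le (by norm_num), ← neg_sub (α i) n,
          Real.rpow_neg (by norm_num), div_eq_mul_inv, mul_comm]

theorem stmt14 (n m : ℕ) (hn : 1 ≤ n) (hm : 1 ≤ m)
    (α : Fin m → ℝ) (hα : ∀ i, 0 < α i ∧ α i < (n : ℝ)) :
    ∃ C > (0 : ℝ), ∀ (x : EuclideanSpace ℝ (Fin n)) (r : ℝ), 0 < r →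
      ∀ y ∈ ball x r, ∀ f : Fin m → EuclideanSpace ℝ (Fin n) → ℝ,
      (∀ i, LocallyIntegrable (f i) volume) →
      ENNReal.ofReal
          |multIFrac n m (∑ i, α i)
            (fun i => ((ball x (2 * r))ᶜ).indicator (f i)) y| ≤
        ENNReal.ofReal C *
          ∏ i, ∫⁻ z in (ball x (2 * r))ᶜ,
            ENNReal.ofReal (|f i z| * dist z x ^ (α i - (n : ℝ))) := by
  refine ⟨∏ i, (2 : ℝ) ^ ((n : ℝ) - α i), by positivity, ?_⟩
  intro x r hr y hy f hf
  set C : ℝ := ∏ i, (2 : ℝ) ^ ((n : ℝ) - α i)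
  have hC : 0 ≤ C := by positivity
  set B := (ball x (2 * r))ᶜ with hB
  have hBm : MeasurableSet B := measurableSet_ball.compl
  let g : Fin m → EuclideanSpace ℝ (Fin n) → ℝ≥0∞ := fun i =>
    B.indicator fun z => ENNReal.ofReal (|f i z| * dist z x ^ (α i - (n : ℝ)))
  have hg : ∀ i, AEMeasurable (g i) volume := fun i => by
    refine AEMeasurable.indicator ?_ hBm
    refine AEMeasurable.ennreal_ofReal (AEMeasurable.mul ?_ ?_)
    · exact (hf i).aestronglyMeasurable.aemeasurable.abs
    · exact ((measurable_id.dist measurable_const).pow_const _).aemeasurable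
  have hpt : ∀ z : Fin m → EuclideanSpace ℝ (Fin n),
      ENNReal.ofReal ‖(∏ i, B.indicator (f i) (z i)) *
        (∑ i, dist y (z i)) ^ ((∑ i, α i) - (m : ℝ) * (n : ℝ))‖ ≤
      ENNReal.ofReal C * ∏ i, g i (z i) := by
    intro z
    by_cases hz : ∀ i, z i ∈ B
    · have hk := sum_dist_rpow_le α (fun i => (hα i).2) hr hy hm z hz
      have hgz : ∀ i, g i (z i) =
          ENNReal.ofReal (|f i (z i)| * dist (z i) x ^ (α i - (n : ℝ))) := fun i =>
        Set.indicator_of_mem (hz i) _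
      simp_rw [hgz, Set.indicator_of_mem (hz _)]
      rw [← ENNReal.ofReal_prod_of_nonneg (fun i _ => by positivity), ← ENNReal.ofReal_mul hC]
      refine ENNReal.ofReal_le_ofReal ?_
      rw [norm_mul, Real.norm_eq_abs, Finset.abs_prod, Real.norm_of_nonneg (by positivity),
        Finset.prod_mul_distrib, mul_left_comm]
      exact mul_le_mul_of_nonneg_left hk (by positivity)
    · push Not at hz
      obtain ⟨i, hi⟩ := hz
      rw [Finset.prod_eq_zero (Finset.mem_univ i) (Set.indicator_of_notMem hi _)]
      simp
  calc ENNReal.ofReal |multIFrac n m (∑ i, α i) (fun i => B.indicator (f i)) y|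
      ≤ ∫⁻ z : Fin m → EuclideanSpace ℝ (Fin n),
          ENNReal.ofReal ‖(∏ i, B.indicator (f i) (z i)) *
            (∑ i, dist y (z i)) ^ ((∑ i, α i) - (m : ℝ) * (n : ℝ))‖ := by
        rw [← Real.norm_eq_abs, ofReal_norm, multIFrac]
        simp_rw [ofReal_norm]
        exact enorm_integral_le_lintegral_enorm _
    _ ≤ ∫⁻ z : Fin m → EuclideanSpace ℝ (Fin n), ENNReal.ofReal C * ∏ i, g i (z i) :=
        lintegral_mono hpt
    _ = ENNReal.ofReal C * ∏ i, ∫⁻ z, g i z := by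
        rw [lintegral_const_mul' _ _ ENNReal.ofReal_ne_top, lintegral_fin_prod m g hg]
    _ = _ := by simp_rw [g, lintegral_indicator hBm]
end

section
/- Let n ≥ 1 and m ≥ 1 be integers, let 0 < α_i < n and 1 < p_i < n/α_i for i = 1,…,m, and set α = α_1 + ⋯ + α_m. Then there exists a constant C > 0 such that for every x ∈ ℝ^n, every r > 0, every y ∈ B(x,r), and all functions f_1,…,f_m locally in L^{p_i}(ℝ^n) respectively, writing f_i^∞ = f_i · χ_{ℝ^n ∖ B(x,2r)}, one has M_{α,m}(f_1^∞,…,f_m^∞)(y) ≤ C ∏_{i=1}^m sup_{t>2r} t^{α_i − n/p_i} ‖f_i‖_{L^{p_i}(B(x,t))}. -/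
/-!
Let `B = B(c,t)` be a ball containing `y ∈ B(x,r)`. If `B ⊆ B(x,2r)`, every `f_i^∞` vanishes on `B`
and the average over `B` is zero. Otherwise `B` has a point at distance at least `2r` from `x`,
which forces `r < 2t`; then `T = 2t + r` satisfies `T > 2r`, `T < 4t` and `B ⊆ B(x,T)`.
Hölder's inequality on `B` gives
`|B|^{α_i/n - 1} ∫_B |f_i| ≤ |B|^{α_i/n - 1/p_i} ‖f_i‖_{L^{p_i}(B)}`,
and since `α_i - n/p_i < 0`, the first factor is at most a constant times `T^{α_i - n/p_i}`.
This single-function bound is `factor_bound`; the theorem follows by multiplying over `i`, as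
`|B|^{α/n} = ∏ |B|^{α_i/n}`.
-/

open MeasureTheory Metric ENNReal

/-- The multilinear fractional maximal operator `M_{α,m}` on `ℝⁿ`. -/
noncomputable def multMFrac (n m : ℕ) (α : ℝ)
    (f : Fin m → EuclideanSpace ℝ (Fin n) → ℝ) (x : EuclideanSpace ℝ (Fin n)) : ℝ≥0∞ :=
  ⨆ (c : EuclideanSpace ℝ (Fin n)) (t : ℝ) (_ : x ∈ ball c t),
    volume (ball c t) ^ (α / (n : ℝ)) *
      ∏ i, (volume (ball c t))⁻¹ * ∫⁻ y in ball c t, ENNReal.ofReal |f i y|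

/-- The `L^p` norm of `f` over the ball `B(x,t)`. -/
noncomputable def ballLpNorm {n : ℕ} (p : ℝ) (f : EuclideanSpace ℝ (Fin n) → ℝ)
    (x : EuclideanSpace ℝ (Fin n)) (t : ℝ) : ℝ≥0∞ :=
  (∫⁻ y in ball x t, ENNReal.ofReal (|f y| ^ p)) ^ (1 / p)

/-- Hölder's inequality on a ball, against the constant function `1`. -/
lemma lintegral_ball_le_holder {n : ℕ} {p : ℝ} (hp : 1 < p)
    {f : EuclideanSpace ℝ (Fin n) → ℝ} (hf : Measurable f)
    (c : EuclideanSpace ℝ (Fin n)) (t : ℝ) :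
    ∫⁻ z in ball c t, ENNReal.ofReal |f z| ≤
      ballLpNorm p f c t * volume (ball c t) ^ (1 - 1 / p) := by
  have hpq := Real.HolderConjugate.conjExponent hp
  have h := ENNReal.lintegral_mul_le_Lp_mul_Lq (volume.restrict (ball c t)) hpq
    (f := fun z => ENNReal.ofReal |f z|) (g := fun _ => 1)
    (by fun_prop) (by fun_prop)
  have hq : 1 / p.conjExponent = 1 - 1 / p := by
    have := hpq.inv_add_inv_eq_one
    simp only [one_div]
    linarith
  have hpow : ∀ z, ENNReal.ofReal |f z| ^ p = ENNReal.ofReal (|f z| ^ p) := fun z =>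
    ENNReal.ofReal_rpow_of_nonneg (abs_nonneg _) (by linarith)
  simp only [Pi.mul_apply, mul_one, ENNReal.one_rpow, lintegral_const, Measure.restrict_apply_univ,
    one_mul, hq, hpow] at h
  exact h

lemma ballLpNorm_mono {n : ℕ} {p : ℝ} (hp : 1 < p) (f : EuclideanSpace ℝ (Fin n) → ℝ)
    {c x : EuclideanSpace ℝ (Fin n)} {t T : ℝ} (h : ball c t ⊆ ball x T) :
    ballLpNorm p f c t ≤ ballLpNorm p f x T := by
  unfold ballLpNorm
  exact ENNReal.rpow_le_rpow (lintegral_mono_set h) (by positivity)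

/-- The negative power `α/n - 1/p` of `|B(c,t)|` is controlled by the power `α - n/p` of any
radius `T ≤ 4t`; here `v` is the volume of the unit ball. -/
lemma volume_power_bound {n : ℕ} (hn : 1 ≤ n) {a p v t T : ℝ} (hv : 0 < v) (ht : 0 < t)
    (hT : 0 < T) (hTt : T ≤ 4 * t) (he : a - n / p ≤ 0) :
    (t ^ n * v) ^ (a / n - 1 / p) ≤
      (v ^ (a / n - 1 / p) * 4 ^ (-(a - n / p))) * T ^ (a - n / p) := by
  have hn' : (n : ℝ) ≠ 0 := by positivity
  have h1 : (t ^ n) ^ (a / n - 1 / p) = t ^ (a - n / p) := by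
    rw [← Real.rpow_natCast, ← Real.rpow_mul ht.le]
    congr 1
    field_simp
  rw [Real.mul_rpow (by positivity) hv.le, h1]
  have h2 : t ^ (a - n / p) ≤ (T / 4) ^ (a - n / p) :=
    Real.rpow_le_rpow_of_nonpos (by positivity) (by linarith) he
  rw [Real.div_rpow hT.le (by norm_num), div_eq_mul_inv (T ^ _),
    ← Real.rpow_neg (by norm_num)] at h2
  calc _ ≤ (T ^ (a - n / p) * 4 ^ (-(a - n / p))) * v ^ (a / n - 1 / p) := by gcongr
    _ = _ := by ring

/-- The bound for one function: on a ball `B(c,t)` meeting `B(x,r)` whose radius satisfies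
`r < 2t`. -/
lemma factor_bound {n : ℕ} (hn : 1 ≤ n) {a p : ℝ} (ha : 0 < a) (hp : 1 < p) (hpa : p < n / a)
    {x y c : EuclideanSpace ℝ (Fin n)} {r t : ℝ} (hr : 0 < r) (hrt : r < 2 * t)
    (hyx : y ∈ ball x r) (hyc : y ∈ ball c t)
    {f : EuclideanSpace ℝ (Fin n) → ℝ} (hf : Measurable f) :
    volume (ball c t) ^ (a / n) * ((volume (ball c t))⁻¹ *
        ∫⁻ z in ball c t, ENNReal.ofReal |((ball x (2 * r))ᶜ).indicator f z|) ≤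
      ENNReal.ofReal ((volume (ball (0 : EuclideanSpace ℝ (Fin n)) 1)).toReal ^ (a / n - 1 / p) *
          4 ^ (-(a - n / p))) *
        ⨆ (s : ℝ) (_ : 2 * r < s),
          ENNReal.ofReal (s ^ (a - (n : ℝ) / p)) * ballLpNorm p f x s := by
  have ht : 0 < t := by linarith
  set v := (volume (ball (0 : EuclideanSpace ℝ (Fin n)) 1)).toReal with hvdef
  have hv : 0 < v := ENNReal.toReal_pos (measure_ball_pos _ _ one_pos).ne' measure_ball_lt_top.ne
  have hvol : volume (ball c t) = ENNReal.ofReal (t ^ n * v) := by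
    rw [Measure.addHaar_ball_of_pos _ _ ht, ENNReal.ofReal_mul (by positivity), hvdef,
      ENNReal.ofReal_toReal measure_ball_lt_top.ne]
    simp
  have he : a - n / p ≤ 0 := by
    rw [lt_div_iff₀ ha] at hpa
    rw [sub_nonpos, le_div_iff₀ (by linarith)]
    linarith
  have hsub : ball c t ⊆ ball x (2 * t + r) := by
    intro w hw
    simp only [mem_ball] at *
    have h1 := dist_triangle w y x
    have h2 := dist_triangle_right w y c
    linarith
  have hind : ∫⁻ z in ball c t, ENNReal.ofReal |((ball x (2 * r))ᶜ).indicator f z| ≤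
      ∫⁻ z in ball c t, ENNReal.ofReal |f z| := by
    refine lintegral_mono fun z => ENNReal.ofReal_le_ofReal ?_
    by_cases hz : z ∈ (ball x (2 * r))ᶜ
    · simp only [Set.indicator_of_mem hz, le_refl]
    · simp only [Set.indicator_of_notMem hz, abs_zero, abs_nonneg]
  have hV0 : volume (ball c t) ≠ 0 := (measure_ball_pos _ _ ht).ne'
  have hVt : volume (ball c t) ≠ ⊤ := measure_ball_lt_top.ne
  calc _ ≤ volume (ball c t) ^ (a / n) * ((volume (ball c t))⁻¹ *
        (ballLpNorm p f x (2 * t + r) * volume (ball c t) ^ (1 - 1 / p))) := by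
        gcongr
        exact hind.trans ((lintegral_ball_le_holder hp hf c t).trans
          (mul_le_mul_left (ballLpNorm_mono hp f hsub) _))
    _ = volume (ball c t) ^ (a / n - 1 / p) * ballLpNorm p f x (2 * t + r) := by
        have : a / n - 1 / p = a / n + (-1 + (1 - 1 / p)) := by ring
        rw [this, ENNReal.rpow_add _ _ hV0 hVt, ENNReal.rpow_add _ _ hV0 hVt, ENNReal.rpow_neg_one]
        ring
    _ ≤ ENNReal.ofReal (v ^ (a / n - 1 / p) * 4 ^ (-(a - n / p))) *
        (ENNReal.ofReal ((2 * t + r) ^ (a - (n : ℝ) / p)) * ballLpNorm p f x (2 * t + r)) := by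
        rw [← mul_assoc, ← ENNReal.ofReal_mul (by positivity), hvol,
          ENNReal.ofReal_rpow_of_pos (by positivity)]
        gcongr
        exact volume_power_bound hn hv ht (by linarith) (by linarith) he
    _ ≤ _ := by
        gcongr
        exact le_iSup₂_of_le (2 * t + r) (by linarith) le_rfl

theorem stmt15 (n m : ℕ) (hn : 1 ≤ n) (hm : 1 ≤ m)
    (α p : Fin m → ℝ) (hα : ∀ i, 0 < α i ∧ α i < (n : ℝ))
    (hp : ∀ i, 1 < p i ∧ p i < (n : ℝ) / α i) :
    ∃ C > (0 : ℝ), ∀ (x : EuclideanSpace ℝ (Fin n)) (r : ℝ), 0 < r →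
      ∀ y ∈ ball x r, ∀ f : Fin m → EuclideanSpace ℝ (Fin n) → ℝ,
      (∀ i, Measurable (f i)) →
      (∀ i (x' : EuclideanSpace ℝ (Fin n)) (t : ℝ), 0 < t →
        (∫⁻ z in ball x' t, ENNReal.ofReal (|f i z| ^ p i)) < ⊤) →
      multMFrac n m (∑ i, α i) (fun i => ((ball x (2 * r))ᶜ).indicator (f i)) y ≤
        ENNReal.ofReal C *
          ∏ i, ⨆ (t : ℝ) (_ : 2 * r < t),
            ENNReal.ofReal (t ^ (α i - (n : ℝ) / p i)) * ballLpNorm (p i) (f i) x t := by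
  have hv : 0 < (volume (ball (0 : EuclideanSpace ℝ (Fin n)) 1)).toReal :=
    ENNReal.toReal_pos (measure_ball_pos _ _ one_pos).ne' measure_ball_lt_top.ne
  refine ⟨∏ i, ((volume (ball (0 : EuclideanSpace ℝ (Fin n)) 1)).toReal ^ (α i / n - 1 / p i) *
    4 ^ (-(α i - n / p i))), Finset.prod_pos fun i _ => by positivity, ?_⟩
  intro x r hr y hy f hf _
  unfold multMFrac
  refine iSup_le fun c => iSup_le fun t => iSup_le fun hyc => ?_
  by_cases hsub : ball c t ⊆ ball x (2 * r)
  · have h0 : ∫⁻ z in ball c t,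
        ENNReal.ofReal |((ball x (2 * r))ᶜ).indicator (f ⟨0, hm⟩) z| = 0 := by
      rw [setLIntegral_congr_fun (g := fun _ => 0) measurableSet_ball]
      · simp
      · intro z hz
        have : z ∉ (ball x (2 * r))ᶜ := fun h => h (hsub hz)
        simp only [Set.indicator_of_notMem this, abs_zero, ENNReal.ofReal_zero]
    rw [Finset.prod_eq_zero (Finset.mem_univ (⟨0, hm⟩ : Fin m)) (by rw [h0, mul_zero]), mul_zero]
    exact zero_le
  · obtain ⟨z, hz, hzx⟩ := Set.not_subset.mp hsub
    have hrt : r < 2 * t := by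
      simp only [mem_ball, not_lt] at *
      have h1 := dist_triangle z y x
      have h2 := dist_triangle_right z y c
      linarith
    have ht : 0 < t := by linarith
    have hpow : volume (ball c t) ^ ((∑ i, α i) / (n : ℝ)) =
        ∏ i, volume (ball c t) ^ (α i / (n : ℝ)) := by
      rw [Finset.sum_div]
      have hV0 : volume (ball c t) ≠ 0 := (measure_ball_pos _ _ ht).ne'
      have hVt : volume (ball c t) ≠ ⊤ := measure_ball_lt_top.ne
      induction (Finset.univ : Finset (Fin m)) using Finset.induction_on with
      | empty => simp
      | insert i s hi ih =>
        rw [Finset.sum_insert hi, Finset.prod_insert hi, ENNReal.rpow_add _ _ hV0 hVt, ih]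
    rw [hpow, ← Finset.prod_mul_distrib, ENNReal.ofReal_prod_of_nonneg fun i _ => by positivity,
      ← Finset.prod_mul_distrib]
    exact Finset.prod_le_prod' fun i _ =>
      factor_bound hn (hα i).1 (hp i).1 (hp i).2 hr hrt hy hyc (hf i)
end
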